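/- If r ≥ 4, then the map t ↦ e^{P_t(g_t)} is C^k on U, where k = min(N − 1, r − 4). -/

import Mathlib

noncomputable section

open MeasureTheory Complex Filter Set
open scoped Topology ENNReal NNReal BigOperators FourierTransform SchwartzMap

/-! ### `C^N` families of `C^r` functions -/

/-- Bundle a function of a real variable as a bounded continuous function
(junk value `0` if it is not bounded continuous). -/
def toBCF (u : ℝ → ℝ) : BoundedContinuousFunction ℝ ℝ :=
  open scoped Classical in
  if h : Continuous u ∧ ∃ C, ∀ x y, dist (u x) (u y) ≤ C then ⟨⟨u, h.1⟩, h.2⟩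
  else 0

section Family
variable {P : Type*} [NormedAddCommGroup P] [NormedSpace ℝ P]

/-- `t ↦ f t` is a `C^N` map on `U` with values in the space `C^r(ℝ)`
(of bounded `C^r` functions): each value is `C^r` and each derivative of order `≤ r`
depends on the parameter in a `C^N` way, as a bounded continuous function. -/
def CNFamily (N : ℕ) (r : ℕ) (U : Set P) (f : P → ℝ → ℝ) : Prop :=
  (∀ t ∈ U, ContDiff ℝ r (f t)) ∧
  ∀ j : ℕ, j ≤ r → ContDiffOn ℝ N (fun t => toBCF (iteratedDeriv j (f t))) U

/-- `t ↦ F t` is a `C^N` map on `U` with values in `C^r(ℝ)`, where the values may be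
unbounded (e.g. diffeomorphisms of `ℝ`): the value at the base point and all
derivatives of order `1 ≤ j ≤ r` are `C^N` in the parameter. -/
def CNFamilyU (N : ℕ) (r : ℕ) (U : Set P) (F : P → ℝ → ℝ) : Prop :=
  (∀ t ∈ U, ContDiff ℝ r (F t)) ∧
  ContDiffOn ℝ N (fun t => F t 0) U ∧
  ∀ j : ℕ, 1 ≤ j → j ≤ r → ContDiffOn ℝ N (fun t => toBCF (iteratedDeriv j (F t))) U

end Family

/-- `F` is a `C^k` diffeomorphism of `ℝ`. -/
def IsCDiffeo (k : ℕ) (F : ℝ → ℝ) : Prop :=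
  ContDiff ℝ k F ∧ Function.Bijective F ∧ ∀ x, deriv F x ≠ 0

/-! ### The circle, circle maps through their lifts, periodic points, pressure -/

/-- The circle `S¹ = ℝ/ℤ`. -/
abbrev 𝕊 : Type := UnitAddCircle

/-- The canonical representative in `[0,1)` of a point of the circle. -/
def liftRep (y : 𝕊) : ℝ := ((AddCircle.equivIco 1 0) y).1

/-- The self-map of the circle induced by a map `T : ℝ → ℝ` (meant to be applied to
lifts of circle maps, i.e. maps commuting with integer translations). -/
def circleMapC (T : ℝ → ℝ) (y : 𝕊) : 𝕊 := (T (liftRep y) : ℝ) 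

/-- The function on the circle induced by a function `g : ℝ → ℝ` (meant to be applied
to `1`-periodic functions). -/
def circleFun (g : ℝ → ℝ) (y : 𝕊) : ℝ := g (liftRep y)

/-- `T` is the lift of a degree `d` circle map. -/
def IsCircleLift (T : ℝ → ℝ) (d : ℤ) : Prop := ∀ x, T (x + 1) = T x + d

/-- Representatives in `[0,1)` of the fixed points of the `n`-th iterate of the
circle map with lift `T`. -/
def periodicPtsIn (T : ℝ → ℝ) (n : ℕ) : Set ℝ :=
  {x | x ∈ Set.Ico (0:ℝ) 1 ∧ ∃ k : ℤ, T^[n] x = x + k}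

/-- Birkhoff sum `g_{n}(x) = ∑_{i<n} g(T^i x)`. -/
def birkhoff (T g : ℝ → ℝ) (n : ℕ) (x : ℝ) : ℝ :=
  ∑ i ∈ Finset.range n, g (T^[i] x)

/-- `T` is (the lift of) a `C^r` expanding circle map with expansion constant `lam⁻¹`. -/
def IsExpandingLift (lam : ℝ) (r : ℕ) (T : ℝ → ℝ) : Prop :=
  ContDiff ℝ r T ∧ (∃ d : ℤ, IsCircleLift T d) ∧ ∀ x, lam⁻¹ ≤ |deriv T x|

/-- The topological pressure `P(T, g)` of the potential `g` for an expanding circle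
map (with lift) `T`, computed through weighted periodic orbits. -/
def pressureExp (T g : ℝ → ℝ) : ℝ :=
  limsup (fun n : ℕ =>
    Real.log (∑ᶠ x ∈ periodicPtsIn T n, Real.exp (birkhoff T g n x)) / n) atTop

section CFam
variable {P : Type*} [NormedAddCommGroup P] [NormedSpace ℝ P]

/-- `t ↦ T t` is a `C^N` family on `U`, with values in the `C^r` expanding maps of the
circle with expansion constant `lam⁻¹` (described through their lifts). -/
def ExpandingFamily (N r : ℕ) (lam : ℝ) (U : Set P) (T : P → ℝ → ℝ) : Prop :=
  (∀ t ∈ U, IsExpandingLift lam r (T t)) ∧ CNFamilyU N r U T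

/-- `t ↦ g t` is a `C^N` family on `U` of `C^r` functions on the circle
(described through their `1`-periodic lifts). -/
def PotentialFamily (N r : ℕ) (U : Set P) (G : P → ℝ → ℝ) : Prop :=
  (∀ t ∈ U, ContDiff ℝ r (G t) ∧ ∀ x, G t (x + 1) = G t x) ∧ CNFamily N r U G

/-!
Let `Z_n(t)` be the sum over the `n`-th order preimages of `0` of the exponentials of the Birkhoff
sums of `g_t`. The pressure of `(T_t, g_t)` is the limit of `log Z_n(t) / n`, hence the limit of
`log (Z_{n+1}(t) / Z_n(t))`, because periodic points of order `n` can be matched with preimages of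
order `n` at bounded distortion. The ratio is an average of a fixed function over the branches of
order `n`, and contraction of the inverse branches makes its increments decay exponentially in `n`,
uniformly in `t`. Its `t`-derivatives up to order `K = min N r` need not decay, but they grow at
most polynomially in `n`: this only uses uniform bounds on joint derivatives of the inverse
branches and of the potential. Interpolating between exponential decay of the increments and
polynomial growth of their `K`-th derivatives yields summability of all derivatives of order at most
`K - 1`, so the limit is `C^{K-1}`.
-/

/-! ### Rapidly decaying sequences of functions -/

section Growth

variable {X F : Type*} [SeminormedAddCommGroup F]

/-- The sequence of functions `u n` tends uniformly to zero faster than any power of `n`. -/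
def RapidlyDecaying (u : ℕ → X → F) : Prop :=
  ∀ q : ℕ, ∃ A : ℝ, ∀ n x, ‖u n x‖ ≤ A / (n + 1 : ℝ) ^ q

/-- The sup norms of the functions `u n` grow at most polynomially in `n`. -/
def PolynomiallyBounded (u : ℕ → X → F) : Prop :=
  ∃ (C : ℝ) (p : ℕ), ∀ n x, ‖u n x‖ ≤ C * (n + 1 : ℝ) ^ p

theorem exists_add_one_pow_mul_pow_le (q : ℕ) {θ : ℝ} (hθ0 : 0 ≤ θ) (hθ1 : θ < 1) :
    ∃ B : ℝ, ∀ k : ℕ, (k + 1 : ℝ) ^ q * θ ^ k ≤ B := by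
  have hlim : Tendsto (fun k : ℕ => (2 : ℝ) ^ (q - 1) * ((k : ℝ) ^ q * θ ^ k + θ ^ k)) atTop
      (𝓝 (2 ^ (q - 1) * (0 + 0))) :=
    ((tendsto_pow_const_mul_const_pow_of_lt_one q hθ0 hθ1).add
      (tendsto_pow_atTop_nhds_zero_of_lt_one hθ0 hθ1)).const_mul _
  obtain ⟨B, hB⟩ := hlim.bddAbove_range
  refine ⟨B, fun k => le_trans ?_ (hB ⟨k, rfl⟩)⟩
  calc (k + 1 : ℝ) ^ q * θ ^ k ≤ 2 ^ (q - 1) * ((k : ℝ) ^ q + 1 ^ q) * θ ^ k := by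
        gcongr
        exact add_pow_le k.cast_nonneg zero_le_one q
    _ = 2 ^ (q - 1) * ((k : ℝ) ^ q * θ ^ k + θ ^ k) := by ring

theorem RapidlyDecaying.of_geometric {u : ℕ → X → F} {a θ : ℝ} (ha : 0 ≤ a) (hθ0 : 0 ≤ θ)
    (hθ1 : θ < 1) {m : ℕ} (hm : m ≠ 0) (hu : ∀ n x, ‖u n x‖ ≤ a * θ ^ (n / m)) :
    RapidlyDecaying u := by
  intro q
  obtain ⟨B, hB⟩ := exists_add_one_pow_mul_pow_le q hθ0 hθ1
  refine ⟨a * (m ^ q * B), fun n x => (hu n x).trans ?_⟩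
  have hn : (n + 1 : ℝ) ≤ m * ((n / m : ℕ) + 1) := by
    exact_mod_cast Nat.lt_mul_div_succ n (Nat.pos_of_ne_zero hm)
  rw [le_div_iff₀ (by positivity), mul_assoc]
  refine mul_le_mul_of_nonneg_left ?_ ha
  calc θ ^ (n / m) * (n + 1 : ℝ) ^ q ≤ θ ^ (n / m) * (m * ((n / m : ℕ) + 1)) ^ q := by gcongr
    _ = m ^ q * ((((n / m : ℕ) : ℝ) + 1) ^ q * θ ^ (n / m)) := by rw [mul_pow]; ring
    _ ≤ m ^ q * B := by gcongr; exact hB _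

theorem PolynomiallyBounded.sub_succ {u : ℕ → X → F} (hu : PolynomiallyBounded u) :
    PolynomiallyBounded fun n x => u (n + 1) x - u n x := by
  obtain ⟨C, p, hC⟩ := hu
  refine ⟨|C| * 2 ^ p + |C|, p, fun n x => ?_⟩
  have hle : ∀ k x, ‖u k x‖ ≤ |C| * (k + 1 : ℝ) ^ p := fun k x =>
    (hC k x).trans (by gcongr; exact le_abs_self C)
  have hshift : (((n + 1 : ℕ) : ℝ) + 1) ^ p ≤ 2 ^ p * (n + 1 : ℝ) ^ p := by
    rw [← mul_pow]
    gcongr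
    push_cast
    linarith [n.cast_nonneg (α := ℝ)]
  calc ‖u (n + 1) x - u n x‖ ≤ ‖u (n + 1) x‖ + ‖u n x‖ := norm_sub_le _ _
    _ ≤ |C| * (2 ^ p * (n + 1 : ℝ) ^ p) + |C| * (n + 1 : ℝ) ^ p :=
        add_le_add ((hle _ x).trans (by gcongr)) (hle n x)
    _ = (|C| * 2 ^ p + |C|) * (n + 1 : ℝ) ^ p := by ring

theorem summable_div_add_one_sq (A : ℝ) : Summable fun n : ℕ => A / (n + 1 : ℝ) ^ 2 := by
  have h := (summable_nat_add_iff 1).2 (Real.summable_one_div_nat_pow.2 one_lt_two)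
  simpa only [Nat.cast_add, Nat.cast_one, mul_one_div] using h.mul_left A

end Growth

section Interpolation

variable {E F : Type*} [NormedAddCommGroup E] [NormedSpace ℝ E] [NormedAddCommGroup F]
  [NormedSpace ℝ F]

theorem norm_fderiv_le_of_norm_le_of_lipschitzWith {g : E → F} (hg : Differentiable ℝ g) {a : ℝ}
    (ha : ∀ x, ‖g x‖ ≤ a) {M : ℝ≥0} (hM : LipschitzWith M (fderiv ℝ g)) {h : ℝ} (hh : 0 < h)
    (x : E) : ‖fderiv ℝ g x‖ ≤ 2 * a / h + M * h := by
  have ha0 : 0 ≤ a := (norm_nonneg _).trans (ha x)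
  refine ContinuousLinearMap.opNorm_le_of_unit_norm (by positivity) fun v hv => ?_
  have hhv : ‖h • v‖ = h := by rw [norm_smul, hv, mul_one, Real.norm_of_nonneg hh.le]
  have taylor : ‖g (x + h • v) - g x - fderiv ℝ g x (h • v)‖ ≤ M * h * ‖h • v‖ := by
    have hmean := (convex_closedBall x h).norm_image_sub_le_of_norm_fderiv_le' (𝕜 := ℝ) (f := g)
      (φ := fderiv ℝ g x) (C := M * h) (y := x + h • v) (fun z _ => hg z)
      (fun z hz => (hM.norm_sub_le z x).trans ?_) (Metric.mem_closedBall_self hh.le)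
      (by rw [mem_closedBall_iff_norm, add_sub_cancel_left, hhv])
    · rwa [add_sub_cancel_left] at hmean
    · gcongr
      rwa [mem_closedBall_iff_norm] at hz
  have hderiv : h * ‖fderiv ℝ g x v‖ ≤ 2 * a + M * h * h := by
    calc h * ‖fderiv ℝ g x v‖
        = ‖g (x + h • v) - g x - (g (x + h • v) - g x - fderiv ℝ g x (h • v))‖ := by
          rw [sub_sub_cancel, map_smul, norm_smul, Real.norm_of_nonneg hh.le]
      _ ≤ ‖g (x + h • v)‖ + ‖g x‖ + M * h * ‖h • v‖ :=
          (norm_sub_le _ _).trans (add_le_add (norm_sub_le _ _) taylor)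
      _ ≤ 2 * a + M * h * h := by rw [hhv]; linarith [ha (x + h • v), ha x]
  calc ‖fderiv ℝ g x v‖ ≤ (2 * a + M * h * h) / h := by rw [le_div_iff₀ hh]; linarith
    _ = 2 * a / h + M * h := by field_simp

theorem norm_iteratedFDeriv_succ_le_of_norm_le {g : E → F} {j : ℕ} (hg : ContDiff ℝ (j + 2 : ℕ) g)
    {a M : ℝ} (ha : ∀ x, ‖iteratedFDeriv ℝ j g x‖ ≤ a)
    (hM : ∀ x, ‖iteratedFDeriv ℝ (j + 2) g x‖ ≤ M) {h : ℝ} (hh : 0 < h) (x : E) :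
    ‖iteratedFDeriv ℝ (j + 1) g x‖ ≤ 2 * a / h + M * h := by
  have hM0 : 0 ≤ M := (norm_nonneg _).trans (hM x)
  have hlip : LipschitzWith M.toNNReal (iteratedFDeriv ℝ (j + 1) g) :=
    lipschitzWith_of_nnnorm_fderiv_le
      (hg.differentiable_iteratedFDeriv (by exact_mod_cast Nat.lt_succ_self _)) fun z => by
        rw [← NNReal.coe_le_coe, coe_nnnorm, norm_fderiv_iteratedFDeriv, Real.coe_toNNReal _ hM0]
        exact hM z
  have hlip' : LipschitzWith M.toNNReal (fderiv ℝ (iteratedFDeriv ℝ j g)) := by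
    rw [iteratedFDeriv_succ_eq_comp_left] at hlip
    exact (LinearIsometryEquiv.isometry _).lipschitzWith_iff _ |>.1 hlip
  have := norm_fderiv_le_of_norm_le_of_lipschitzWith
    (hg.differentiable_iteratedFDeriv (by exact_mod_cast (by lia : j < j + 2))) ha hlip' hh x
  rwa [norm_fderiv_iteratedFDeriv, Real.coe_toNNReal _ hM0] at this

/-- Derivatives of order `j + 1` are interpolated between the rapidly decaying ones of order `j` and
the polynomially bounded ones of order `j + 2`. -/
theorem RapidlyDecaying.iteratedFDeriv {u : ℕ → E → F} {K : ℕ} (hu0 : RapidlyDecaying u)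
    (hu : ∀ n, ContDiff ℝ K (u n))
    (hb : ∀ j ≤ K, PolynomiallyBounded fun n => iteratedFDeriv ℝ j (u n)) :
    ∀ j ≤ K - 1, RapidlyDecaying fun n => iteratedFDeriv ℝ j (u n)
  | 0, _ => fun q => by simpa only [norm_iteratedFDeriv_zero] using hu0 q
  | j + 1, hj => fun q => by
    obtain ⟨C, p, hC⟩ := hb (j + 2) (by lia)
    obtain ⟨A, hA⟩ := RapidlyDecaying.iteratedFDeriv hu0 hu hb j (by lia) (2 * q + p)
    refine ⟨2 * A + C, fun n x => ?_⟩
    refine (norm_iteratedFDeriv_succ_le_of_norm_le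
      ((hu n).of_le (by exact_mod_cast (by lia : j + 2 ≤ K))) (hA n) (hC n)
      (h := ((n + 1 : ℝ) ^ (q + p))⁻¹) (by positivity) x).trans_eq ?_
    field_simp
    ring

theorem exists_contDiff_tendsto_of_rapidlyDecaying [CompleteSpace F] {f : ℕ → E → F} {K : ℕ}
    (hf : ∀ n, ContDiff ℝ K (f n))
    (hb : ∀ j ≤ K, PolynomiallyBounded fun n => iteratedFDeriv ℝ j (f n))
    (hd : RapidlyDecaying fun n x => f (n + 1) x - f n x) :
    ∃ g : E → F, ContDiff ℝ (K - 1 : ℕ) g ∧ ∀ x, Tendsto (fun n => f n x) atTop (𝓝 (g x)) := by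
  have hdc : ∀ n, ContDiff ℝ K fun x => f (n + 1) x - f n x := fun n => (hf (n + 1)).sub (hf n)
  have hdb : ∀ j ≤ K, PolynomiallyBounded fun n =>
      iteratedFDeriv ℝ j fun x => f (n + 1) x - f n x := by
    intro j hj
    have hsub : ∀ n x, iteratedFDeriv ℝ j (fun x => f (n + 1) x - f n x) x
        = iteratedFDeriv ℝ j (f (n + 1)) x - iteratedFDeriv ℝ j (f n) x := fun n x =>
      iteratedFDeriv_sub_apply ((hf (n + 1)).of_le (by exact_mod_cast hj)).contDiffAt
        ((hf n).of_le (by exact_mod_cast hj)).contDiffAt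
    simpa only [PolynomiallyBounded, hsub] using (hb j hj).sub_succ
  choose! A hA using fun j hj => hd.iteratedFDeriv hdc hdb j hj 2
  have hsum : ContDiff ℝ (K - 1 : ℕ) fun x => ∑' n, (f (n + 1) x - f n x) := by
    have := contDiff_tsum (𝕜 := ℝ) (N := ((K - 1 : ℕ) : ℕ∞))
      (f := fun n x => f (n + 1) x - f n x) (v := fun j n => A j / (n + 1 : ℝ) ^ 2)
      (fun n => (hdc n).of_le (by exact_mod_cast K.sub_le 1))
      (fun j _ => summable_div_add_one_sq (A j))
      (fun j n x hj => hA j (by exact_mod_cast hj) n x)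
    exact_mod_cast this
  refine ⟨fun x => f 0 x + ∑' n, (f (n + 1) x - f n x),
    ((hf 0).of_le (by exact_mod_cast K.sub_le 1)).add hsum, fun x => ?_⟩
  obtain ⟨B, hB⟩ := hd 2
  have htel := (Summable.of_norm_bounded (summable_div_add_one_sq B)
    fun n => hB n x).hasSum.tendsto_sum_nat
  simpa only [Finset.sum_range_sub (fun n => f n x), add_sub_cancel] using htel.const_add (f 0 x)

end Interpolation

/-! ### Log-sum-exp functions -/

section LogSumExp

variable {E : Type*} [NormedAddCommGroup E] [NormedSpace ℝ E]

theorem lipschitzWith_log_sum_exp {X J : Type*} [PseudoMetricSpace X] [Fintype J] [Nonempty J]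
    {A : J → X → ℝ} {D : ℝ≥0} (hA : ∀ j, LipschitzWith D (A j)) :
    LipschitzWith D fun x => Real.log (∑ j, Real.exp (A j x)) := by
  have hpos : ∀ x, 0 < ∑ j, Real.exp (A j x) := fun x =>
    Finset.sum_pos (fun _ _ => Real.exp_pos _) Finset.univ_nonempty
  refine LipschitzWith.of_le_add_mul D fun x y => ?_
  calc Real.log (∑ j, Real.exp (A j x))
      ≤ Real.log ((∑ j, Real.exp (A j y)) * Real.exp (D * dist x y)) := by
        refine Real.log_le_log (hpos x) ?_
        rw [Finset.sum_mul]
        refine Finset.sum_le_sum fun j _ => ?_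
        rw [← Real.exp_add]
        exact Real.exp_le_exp.2 ((hA j).le_add_mul x y)
    _ = Real.log (∑ j, Real.exp (A j y)) + D * dist x y := by
        rw [Real.log_mul (hpos y).ne' (Real.exp_pos _).ne', Real.log_exp]

theorem norm_iteratedFDeriv_exp (i : ℕ) (x : ℝ) : ‖iteratedFDeriv ℝ i Real.exp x‖ = Real.exp x := by
  rw [norm_iteratedFDeriv_eq_norm_iteratedDeriv, iteratedDeriv_eq_iterate, Real.iter_deriv_exp,
    Real.norm_of_nonneg (Real.exp_pos x).le]

theorem norm_iteratedFDeriv_sum_exp_le {J : Type*} [Fintype J] {A : J → E → ℝ} {l : ℕ}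
    (hA : ∀ j, ContDiff ℝ l (A j)) {x : E} {M : ℝ}
    (hM : ∀ j i, 1 ≤ i → i ≤ l → ‖iteratedFDeriv ℝ i (A j) x‖ ≤ M ^ i) :
    ‖iteratedFDeriv ℝ l (fun t => ∑ j, Real.exp (A j t)) x‖ ≤
      l.factorial * (∑ j, Real.exp (A j x)) * M ^ l := by
  have hsum : iteratedFDeriv ℝ l (fun t => ∑ j, Real.exp (A j t)) x
      = ∑ j, iteratedFDeriv ℝ l (fun t => Real.exp (A j t)) x :=
    iteratedFDeriv_fun_sum_apply fun j _ => (Real.contDiff_exp.comp (hA j)).contDiffAt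
  rw [hsum, Finset.mul_sum, Finset.sum_mul]
  exact (norm_sum_le _ _).trans <| Finset.sum_le_sum fun j _ =>
    norm_iteratedFDeriv_comp_le Real.contDiff_exp (hA j) le_rfl x
      (fun i _ => (norm_iteratedFDeriv_exp i _).le) (hM j)

theorem iteratedFDeriv_log_const_mul {W : E → ℝ} {l : ℕ} (hW : ContDiff ℝ l W)
    (hpos : ∀ x, 0 < W x) {c : ℝ} (hc : 0 < c) (hl : l ≠ 0) :
    iteratedFDeriv ℝ l (fun x => Real.log (c * W x))
      = iteratedFDeriv ℝ l fun x => Real.log (W x) := by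
  have hlog : ContDiff ℝ l fun x => Real.log (W x) := hW.log fun x => (hpos x).ne'
  ext1 x
  simp_rw [Real.log_mul hc.ne' (hpos _).ne']
  rw [fun_iteratedFDeriv_add_apply contDiffAt_const hlog.contDiffAt,
    iteratedFDeriv_const_of_ne hl, Pi.zero_apply, zero_add]

/-- The bound only involves the logarithmic derivatives of `W` because `log` turns scaling of `W`
into a translation, so that `W x = 1` may be assumed. -/
theorem exists_norm_iteratedFDeriv_log_le (l : ℕ) : ∃ C : ℝ, 0 ≤ C ∧ ∀ {W : E → ℝ},
    ContDiff ℝ l W → (∀ x, 0 < W x) → ∀ {x : E} {D : ℝ},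
    (∀ i, 1 ≤ i → i ≤ l → ‖iteratedFDeriv ℝ i W x‖ ≤ D ^ i * W x) → l ≠ 0 →
    ‖iteratedFDeriv ℝ l (fun t => Real.log (W t)) x‖ ≤ C * D ^ l := by
  set C : ℝ := ∑ i ∈ Finset.range (l + 1), ‖iteratedFDerivWithin ℝ i Real.log (Ioi 0) 1‖
  refine ⟨l.factorial * C, by positivity, fun {W} hW hpos x D hD hl => ?_⟩
  have hlog : ContDiffOn ℝ l Real.log (Ioi 0) := fun y hy =>
    (Real.contDiffAt_log.2 (ne_of_gt hy)).contDiffWithinAt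
  have hx := inv_pos.2 (hpos x)
  rw [← iteratedFDeriv_log_const_mul hW hpos hx hl]
  refine norm_iteratedFDeriv_comp_le' (g := Real.log) (t := Ioi 0) ?_ (uniqueDiffOn_Ioi 0) hlog
    (contDiff_const.mul hW) le_rfl x (fun i hi => ?_) fun i hi1 hil => ?_
  · rintro _ ⟨t, rfl⟩
    exact mul_pos hx (hpos t)
  · rw [inv_mul_cancel₀ (hpos x).ne']
    exact Finset.single_le_sum (f := fun i => ‖iteratedFDerivWithin ℝ i Real.log (Ioi 0) 1‖)
      (fun _ _ => norm_nonneg _) (Finset.mem_range_succ_iff.2 hi)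
  · simp_rw [← smul_eq_mul]
    rw [iteratedFDeriv_const_smul_apply' (hW.of_le (by exact_mod_cast hil)).contDiffAt, norm_smul,
      Real.norm_of_nonneg hx.le, inv_mul_le_iff₀ (hpos x), mul_comm]
    exact hD i hi1 hil

theorem exists_norm_iteratedFDeriv_log_sum_exp_le (l : ℕ) : ∃ C : ℝ, 0 ≤ C ∧
    ∀ {J : Type*} [Fintype J] [Nonempty J] {A : J → E → ℝ}, (∀ j, ContDiff ℝ l (A j)) →
    ∀ {x : E} {M : ℝ}, 1 ≤ M →
    (∀ j i, 1 ≤ i → i ≤ l → ‖iteratedFDeriv ℝ i (A j) x‖ ≤ M) → l ≠ 0 →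
    ‖iteratedFDeriv ℝ l (fun t => Real.log (∑ j, Real.exp (A j t))) x‖ ≤ C * M ^ l := by
  obtain ⟨C, hC0, hC⟩ := exists_norm_iteratedFDeriv_log_le (E := E) l
  refine ⟨C * l.factorial ^ l, by positivity, fun {J} _ _ A hA x M hM hAM hl => ?_⟩
  have hpos : ∀ t, 0 < ∑ j, Real.exp (A j t) := fun t =>
    Finset.sum_pos (fun _ _ => Real.exp_pos _) Finset.univ_nonempty
  have hexp : ∀ i, 1 ≤ i → i ≤ l → ‖iteratedFDeriv ℝ i (fun t => ∑ j, Real.exp (A j t)) x‖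
      ≤ (l.factorial * M) ^ i * ∑ j, Real.exp (A j x) := by
    intro i hi1 hil
    have hfact : (i.factorial : ℝ) ≤ l.factorial ^ i :=
      (Nat.cast_le.2 (Nat.factorial_le hil)).trans
        (le_self_pow₀ (Nat.one_le_cast.2 l.factorial_pos) (by lia))
    calc ‖iteratedFDeriv ℝ i (fun t => ∑ j, Real.exp (A j t)) x‖
        ≤ i.factorial * (∑ j, Real.exp (A j x)) * M ^ i :=
          norm_iteratedFDeriv_sum_exp_le (fun j => (hA j).of_le (by exact_mod_cast hil))
            fun j k hk1 hki => (hAM j k hk1 (hki.trans hil)).trans (le_self_pow₀ hM (by lia))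
      _ ≤ l.factorial ^ i * (∑ j, Real.exp (A j x)) * M ^ i := by
          gcongr
      _ = (l.factorial * M) ^ i * ∑ j, Real.exp (A j x) := by ring
  calc _ ≤ C * (l.factorial * M) ^ l :=
        hC (ContDiff.sum fun j _ => Real.contDiff_exp.comp (hA j)) hpos hexp hl
    _ = C * l.factorial ^ l * M ^ l := by ring

end LogSumExp

/-! ### Transfer operators of iterated function systems -/

section TransferOperator

variable {X Y ι : Type*} [Fintype ι]

/-- The transfer operator of the iterated function system with branches `ψ i` and weights
`exp (φ i)`. The weights are evaluated at the base point `x`, not at its image `ψ i x`. -/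
def transferOp (ψ : ι → X → X) (φ : ι → X → ℝ) (v : X → ℝ) (x : X) : ℝ :=
  ∑ i, Real.exp (φ i x) * v (ψ i x)

/-- The composition of the branches along a word; the first letter of the word acts first. -/
def wordMap (ψ : ι → X → X) : (n : ℕ) → (Fin n → ι) → X → X
  | 0, _, x => x
  | n + 1, w, x => wordMap ψ n (Fin.tail w) (ψ (w 0) x)

/-- The sum of the logarithmic weights met along the orbit of a point under a word. -/
def wordWeight (ψ : ι → X → X) (φ : ι → X → ℝ) : (n : ℕ) → (Fin n → ι) → X → ℝ
  | 0, _, _ => 0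
  | n + 1, w, x => φ (w 0) x + wordWeight ψ φ n (Fin.tail w) (ψ (w 0) x)

/-- The partition function of order `n`, which is the `n`-th iterate of the transfer operator
applied to the constant function `1`. -/
def partitionFun (ψ : ι → X → X) (φ : ι → X → ℝ) (n : ℕ) : X → ℝ :=
  (transferOp ψ φ)^[n] 1

variable {ψ : ι → X → X} {φ : ι → X → ℝ}

theorem iterate_transferOp_eq_sum_word (n : ℕ) (v : X → ℝ) (x : X) :
    (transferOp ψ φ)^[n] v x
      = ∑ w : Fin n → ι, Real.exp (wordWeight ψ φ n w x) * v (wordMap ψ n w x) := by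
  induction n generalizing x with
  | zero => simp only [Function.iterate_zero, id, Fintype.sum_unique, wordWeight, wordMap,
      Real.exp_zero, one_mul]
  | succ n ih =>
    rw [Function.iterate_succ_apply', ← (Fin.consEquiv fun _ => ι).sum_comp,
      Fintype.sum_prod_type]
    refine Finset.sum_congr rfl fun i _ => ?_
    rw [ih, Finset.mul_sum]
    refine Finset.sum_congr rfl fun w _ => ?_
    rw [← mul_assoc, ← Real.exp_add]
    rfl

theorem partitionFun_eq_sum_word (n : ℕ) (x : X) :
    partitionFun ψ φ n x = ∑ w : Fin n → ι, Real.exp (wordWeight ψ φ n w x) := by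
  rw [partitionFun, iterate_transferOp_eq_sum_word]
  simp only [Pi.one_apply, mul_one]

theorem partitionFun_zero (x : X) : partitionFun ψ φ 0 x = 1 := rfl

theorem partitionFun_one (x : X) : partitionFun ψ φ 1 x = ∑ i, Real.exp (φ i x) := by
  simp only [partitionFun, Function.iterate_one, transferOp, Pi.one_apply, mul_one]

theorem partitionFun_succ (n : ℕ) (x : X) :
    partitionFun ψ φ (n + 1) x = ∑ i, Real.exp (φ i x) * partitionFun ψ φ n (ψ i x) := by
  rw [partitionFun, Function.iterate_succ_apply']
  rfl

theorem partitionFun_add (m n : ℕ) (x : X) :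
    partitionFun ψ φ (m + n) x = ∑ w : Fin m → ι,
      Real.exp (wordWeight ψ φ m w x) * partitionFun ψ φ n (wordMap ψ m w x) := by
  rw [partitionFun, Function.iterate_add_apply, iterate_transferOp_eq_sum_word]
  rfl

theorem partitionFun_pos [Nonempty ι] (n : ℕ) (x : X) : 0 < partitionFun ψ φ n x := by
  rw [partitionFun_eq_sum_word]
  exact Finset.sum_pos (fun _ _ => Real.exp_pos _) Finset.univ_nonempty

theorem iterate_transferOp_comp {ψ' : ι → Y → Y} {φ' : ι → Y → ℝ} {h : X → Y}
    (hψ : ∀ i, Function.Semiconj h (ψ i) (ψ' i)) (hφ : ∀ i x, φ' i (h x) = φ i x) (n : ℕ)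
    (v : Y → ℝ) :
    (transferOp ψ φ)^[n] (v ∘ h) = (transferOp ψ' φ')^[n] v ∘ h := by
  refine (Function.Semiconj.iterate_right (f := fun v : Y → ℝ => v ∘ h) (fun v => ?_) n v).symm
  ext x
  simp only [transferOp, Function.comp_apply, hφ, fun i => (hψ i) x]

theorem partitionFun_comp {ψ' : ι → Y → Y} {φ' : ι → Y → ℝ} {h : X → Y}
    (hψ : ∀ i, Function.Semiconj h (ψ i) (ψ' i)) (hφ : ∀ i x, φ' i (h x) = φ i x) (n : ℕ)
    (x : X) : partitionFun ψ' φ' n (h x) = partitionFun ψ φ n x :=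
  (congrFun (iterate_transferOp_comp hψ hφ n 1) x).symm

end TransferOperator

section Distortion

variable {X ι : Type*} [PseudoMetricSpace X] {ψ : ι → X → X} {φ : ι → X → ℝ} {lam L C : ℝ≥0}

/-- The branches `ψ i` contract by the factor `lam` and the logarithmic weights `φ i` are
Lipschitz with constant `L`. -/
structure IsContractingIFS (lam L : ℝ≥0) (ψ : ι → X → X) (φ : ι → X → ℝ) : Prop where
  lt_one : lam < 1
  lipschitz_map : ∀ i, LipschitzWith lam (ψ i)
  lipschitz_weight : ∀ i, LipschitzWith L (φ i)

namespace IsContractingIFS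

theorem lipschitzWith_wordMap (h : IsContractingIFS lam L ψ φ) (n : ℕ) (w : Fin n → ι) :
    LipschitzWith (lam ^ n) (wordMap ψ n w) := by
  induction n with
  | zero => exact LipschitzWith.id
  | succ n ih =>
    rw [pow_succ]
    exact (ih (Fin.tail w)).comp (h.lipschitz_map (w 0))

theorem lipschitzWith_wordWeight (h : IsContractingIFS lam L ψ φ) (hC : L + C * lam ≤ C) (n : ℕ)
    (w : Fin n → ι) : LipschitzWith C (wordWeight ψ φ n w) := by
  induction n with
  | zero => exact LipschitzWith.const' 0
  | succ n ih =>
    exact ((h.lipschitz_weight (w 0)).add ((ih (Fin.tail w)).comp (h.lipschitz_map (w 0)))).weaken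
      hC

theorem lipschitzWith_log_partitionFun [Fintype ι] [Nonempty ι] (h : IsContractingIFS lam L ψ φ)
    (hC : L + C * lam ≤ C) (n : ℕ) :
    LipschitzWith C fun x => Real.log (partitionFun ψ φ n x) := by
  simp only [partitionFun_eq_sum_word]
  exact lipschitzWith_log_sum_exp (h.lipschitzWith_wordWeight hC n)

end IsContractingIFS

end Distortion

/-! ### Exponential convergence of the ratios of partition functions -/

section Softmax

variable {X J : Type*} [Fintype J]

/-- The probability vector proportional to `exp (A j)`. -/
def softmax (A : J → ℝ) (j : J) : ℝ :=
  Real.exp (A j) / ∑ i, Real.exp (A i)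

theorem softmax_nonneg (A : J → ℝ) (j : J) : 0 ≤ softmax A j := by
  unfold softmax; positivity

theorem sum_softmax [Nonempty J] (A : J → ℝ) : ∑ j, softmax A j = 1 := by
  have hpos : 0 < ∑ j, Real.exp (A j) :=
    Finset.sum_pos (fun _ _ => Real.exp_pos _) Finset.univ_nonempty
  simp only [softmax]
  rw [← Finset.sum_div, div_self hpos.ne']

theorem sum_softmax_mul_le [Nonempty J] (A : J → ℝ) {b : J → ℝ} {c : ℝ} (hb : ∀ j, b j ≤ c) :
    ∑ j, softmax A j * b j ≤ c := by
  calc ∑ j, softmax A j * b j ≤ ∑ j, softmax A j * c :=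
        Finset.sum_le_sum fun j _ => mul_le_mul_of_nonneg_left (hb j) (softmax_nonneg A j)
    _ = c := by rw [← Finset.sum_mul, sum_softmax, one_mul]

theorem le_sum_softmax_mul [Nonempty J] (A : J → ℝ) {b : J → ℝ} {c : ℝ} (hb : ∀ j, c ≤ b j) :
    c ≤ ∑ j, softmax A j * b j := by
  calc c = ∑ j, softmax A j * c := by rw [← Finset.sum_mul, sum_softmax, one_mul]
    _ ≤ ∑ j, softmax A j * b j :=
        Finset.sum_le_sum fun j _ => mul_le_mul_of_nonneg_left (hb j) (softmax_nonneg A j)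

theorem exp_neg_mul_softmax_le {A B : J → ℝ} {s : ℝ} (hAB : ∀ j, |A j - B j| ≤ s) (j : J) :
    Real.exp (-(2 * s)) * softmax A j ≤ softmax B j := by
  have hsum : ∑ i, Real.exp (B i) ≤ Real.exp s * ∑ i, Real.exp (A i) := by
    rw [Finset.mul_sum]
    refine Finset.sum_le_sum fun i _ => ?_
    rw [← Real.exp_add, Real.exp_le_exp]
    linarith [(abs_le.1 (hAB i)).1]
  have hnum : Real.exp (-s) * Real.exp (A j) ≤ Real.exp (B j) := by
    rw [← Real.exp_add, Real.exp_le_exp]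
    linarith [(abs_le.1 (hAB j)).2]
  have hpos : ∀ A : J → ℝ, 0 < ∑ i, Real.exp (A i) := fun _ =>
    Finset.sum_pos (fun _ _ => Real.exp_pos _) ⟨j, Finset.mem_univ j⟩
  calc Real.exp (-(2 * s)) * softmax A j
      = Real.exp (-s) * Real.exp (A j) / (Real.exp s * ∑ i, Real.exp (A i)) := by
        rw [softmax, two_mul, neg_add, Real.exp_add, Real.exp_neg s]
        field_simp
    _ ≤ Real.exp (B j) / ∑ i, Real.exp (B i) :=
        div_le_div₀ (Real.exp_pos _).le hnum (hpos B) hsum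

end Softmax

section Doeblin

variable {X J : Type*} [PseudoMetricSpace X] [Fintype J] [Nonempty J]

/-- The function `f` has oscillation at most `a` and Lipschitz constant at most `l`. -/
def OscLipLE (f : X → ℝ) (a l : ℝ) : Prop :=
  ∀ x y, f x - f y ≤ a ∧ f x - f y ≤ l * dist x y

/-- Doeblin's argument: the two averages share the mass `exp (-(2 * D * dist x y))`, on which they
differ only by the contracted variation of `f`. -/
theorem OscLipLE.sum_softmax_sub_le {f : X → ℝ} {a l : ℝ} (hf : OscLipLE f a l) (hl : 0 ≤ l)
    {ψ : J → X → X} {κ : ℝ≥0} (hψ : ∀ j, LipschitzWith κ (ψ j)) {A : J → X → ℝ} {D : ℝ≥0}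
    (hA : ∀ j, LipschitzWith D (A j)) (x y : X) :
    (∑ j, softmax (A · x) j * f (ψ j x)) - ∑ j, softmax (A · y) j * f (ψ j y)
      ≤ (1 - Real.exp (-(2 * (D * dist x y)))) * a + κ * l * dist x y := by
  set q := Real.exp (-(2 * (D * dist x y)))
  set fx := ∑ j, softmax (A · x) j * f (ψ j x)
  have hq1 : q ≤ 1 := Real.exp_le_one_iff.2 (neg_nonpos.2 (by positivity))
  have hmin : ∀ z, 0 ≤ f z - (fx - a) := fun z => by
    have := sum_softmax_mul_le (A · x) (fun j => (sub_le_iff_le_add.1 (hf (ψ j x) z).1))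
    linarith
  have hvar : ∀ j, f (ψ j x) - f (ψ j y) ≤ κ * l * dist x y := fun j => by
    calc f (ψ j x) - f (ψ j y) ≤ l * dist (ψ j x) (ψ j y) := (hf _ _).2
      _ ≤ l * (κ * dist x y) := by gcongr; exact (hψ j).dist_le_mul x y
      _ = κ * l * dist x y := by ring
  have hshift : ∀ z, (∑ j, softmax (A · z) j * f (ψ j y)) - (fx - a)
      = ∑ j, softmax (A · z) j * (f (ψ j y) - (fx - a)) := fun z => by
    simp only [mul_sub, Finset.sum_sub_distrib, ← Finset.sum_mul, sum_softmax, one_mul]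
  have hcoupling : q * ((∑ j, softmax (A · x) j * f (ψ j y)) - (fx - a))
      ≤ (∑ j, softmax (A · y) j * f (ψ j y)) - (fx - a) := by
    rw [hshift, hshift, Finset.mul_sum]
    refine Finset.sum_le_sum fun j _ => ?_
    rw [← mul_assoc]
    exact mul_le_mul_of_nonneg_right
      (exp_neg_mul_softmax_le (fun i => (hA i).dist_le_mul x y) j) (hmin _)
  have hx : fx - κ * l * dist x y ≤ ∑ j, softmax (A · x) j * f (ψ j y) := by
    have := sum_softmax_mul_le (A · x) hvar
    simp only [mul_sub, Finset.sum_sub_distrib] at this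
    linarith
  have hq0 : 0 ≤ q := (Real.exp_pos _).le
  have hd : 0 ≤ κ * l * dist x y := by positivity
  nlinarith

end Doeblin

section PartitionRatio

variable {X ι : Type*} [Fintype ι] {ψ : ι → X → X} {φ : ι → X → ℝ}

/-- The ratio of consecutive partition functions. -/
def partitionRatio (ψ : ι → X → X) (φ : ι → X → ℝ) (n : ℕ) (x : X) : ℝ :=
  partitionFun ψ φ (n + 1) x / partitionFun ψ φ n x

/-- The logarithmic weights of the average which expresses the ratio of order `m + n` through the
one of order `n`. -/
def averageWeight (ψ : ι → X → X) (φ : ι → X → ℝ) (m n : ℕ) (w : Fin m → ι) (x : X) : ℝ :=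
  wordWeight ψ φ m w x + Real.log (partitionFun ψ φ n (wordMap ψ m w x))

theorem partitionRatio_zero (x : X) : partitionRatio ψ φ 0 x = ∑ i, Real.exp (φ i x) := by
  rw [partitionRatio, partitionFun_zero, div_one, zero_add, partitionFun_one]

variable [Nonempty ι]

theorem partitionRatio_pos (n : ℕ) (x : X) : 0 < partitionRatio ψ φ n x :=
  div_pos (partitionFun_pos _ x) (partitionFun_pos _ x)

theorem log_partitionRatio (n : ℕ) (x : X) :
    Real.log (partitionRatio ψ φ n x)
      = Real.log (partitionFun ψ φ (n + 1) x) - Real.log (partitionFun ψ φ n x) :=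
  Real.log_div (partitionFun_pos _ x).ne' (partitionFun_pos _ x).ne'

theorem tendsto_log_partitionFun_div {x : X} {a : ℝ}
    (ha : Tendsto (fun n => Real.log (partitionRatio ψ φ n x)) atTop (𝓝 a)) :
    Tendsto (fun n : ℕ => Real.log (partitionFun ψ φ n x) / n) atTop (𝓝 a) := by
  refine ha.cesaro.congr fun n => ?_
  simp only [log_partitionRatio]
  rw [Finset.sum_range_sub (fun i => Real.log (partitionFun ψ φ i x)), partitionFun_zero,
    Real.log_one, sub_zero, div_eq_inv_mul]

theorem exp_averageWeight (m n : ℕ) (w : Fin m → ι) (x : X) :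
    Real.exp (averageWeight ψ φ m n w x)
      = Real.exp (wordWeight ψ φ m w x) * partitionFun ψ φ n (wordMap ψ m w x) := by
  rw [averageWeight, Real.exp_add, Real.exp_log (partitionFun_pos _ _)]

theorem partitionRatio_add (m n : ℕ) (x : X) :
    partitionRatio ψ φ (m + n) x = ∑ w, softmax (averageWeight ψ φ m n · x) w *
      partitionRatio ψ φ n (wordMap ψ m w x) := by
  simp only [softmax, exp_averageWeight, div_mul_eq_mul_div]
  rw [← Finset.sum_div, ← partitionFun_add, partitionRatio, add_assoc, partitionFun_add]
  congr 1
  refine Finset.sum_congr rfl fun w _ => ?_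
  rw [partitionRatio, mul_assoc, mul_div_cancel₀ _ (partitionFun_pos _ _).ne']

theorem partitionRatio_le {n : ℕ} {c : ℝ} (hc : ∀ x, partitionRatio ψ φ n x ≤ c) (m : ℕ) (x : X) :
    partitionRatio ψ φ (m + n) x ≤ c := by
  rw [partitionRatio_add]
  exact sum_softmax_mul_le _ fun _ => hc _

theorem le_partitionRatio {n : ℕ} {c : ℝ} (hc : ∀ x, c ≤ partitionRatio ψ φ n x) (m : ℕ) (x : X) :
    c ≤ partitionRatio ψ φ (m + n) x := by
  rw [partitionRatio_add]
  exact le_sum_softmax_mul _ fun _ => hc _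

end PartitionRatio

section RatioContraction

variable {X ι : Type*} [PseudoMetricSpace X] [Fintype ι] [Nonempty ι] {ψ : ι → X → X}
  {φ : ι → X → ℝ} {lam L C : ℝ≥0}

namespace IsContractingIFS

theorem lipschitzWith_averageWeight (h : IsContractingIFS lam L ψ φ) (hC : L + C * lam ≤ C)
    (m n : ℕ) (w : Fin m → ι) : LipschitzWith (2 * C) (averageWeight ψ φ m n w) := by
  have hcomp := (h.lipschitzWith_log_partitionFun hC n).comp (h.lipschitzWith_wordMap m w)
  refine ((h.lipschitzWith_wordWeight hC m w).add hcomp).weaken ?_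
  rw [two_mul]
  gcongr
  exact mul_le_of_le_one_right zero_le (pow_le_one₀ zero_le h.lt_one.le)

theorem partitionRatio_sub_le (h : IsContractingIFS lam L ψ φ) (hC : L + C * lam ≤ C) {m n : ℕ}
    {a l : ℝ} (hl : 0 ≤ l) (hn : OscLipLE (partitionRatio ψ φ n) a l) (x y : X) :
    partitionRatio ψ φ (m + n) x - partitionRatio ψ φ (m + n) y
      ≤ (1 - Real.exp (-(4 * C * dist x y))) * a + lam ^ m * l * dist x y := by
  rw [partitionRatio_add, partitionRatio_add]
  convert hn.sum_softmax_sub_le hl (h.lipschitzWith_wordMap m)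
    (h.lipschitzWith_averageWeight hC m n) x y using 5
  · push_cast; ring
  · push_cast; rfl

theorem oscLipLE_partitionRatio_zero (h : IsContractingIFS lam L ψ φ) {a : ℝ}
    (ha : ∀ x, partitionRatio ψ φ 0 x ≤ a) : OscLipLE (partitionRatio ψ φ 0) a (a * L) := by
  intro x y
  have hx := partitionRatio_pos (ψ := ψ) (φ := φ) 0 x
  refine ⟨by linarith [ha x, partitionRatio_pos (ψ := ψ) (φ := φ) 0 y], ?_⟩
  have hxy : Real.exp (-(L * dist x y)) * partitionRatio ψ φ 0 x ≤ partitionRatio ψ φ 0 y := by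
    rw [partitionRatio_zero, partitionRatio_zero, Finset.mul_sum]
    refine Finset.sum_le_sum fun i _ => ?_
    rw [← Real.exp_add, Real.exp_le_exp]
    linarith [(h.lipschitz_weight i).le_add_mul x y]
  have hexp := Real.add_one_le_exp (-(L * dist x y))
  have hLd : 0 ≤ L * dist x y := by positivity
  nlinarith [ha x]

/-- The Lipschitz constant `16 * C * a` is stable under averaging because it dominates the
contribution `4 * C * a` of the distortion of the weights. -/
theorem oscLipLE_partitionRatio (h : IsContractingIFS lam L ψ φ) (hC : L + C * lam ≤ C) {a : ℝ}
    (ha : ∀ x, partitionRatio ψ φ 0 x ≤ a) (n : ℕ) :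
    OscLipLE (partitionRatio ψ φ n) a (16 * C * a) := by
  intro x y
  have hpos := partitionRatio_pos (ψ := ψ) (φ := φ)
  have ha0 : 0 ≤ a := (hpos 0 x).le.trans (ha x)
  have hle : partitionRatio ψ φ n x ≤ a := partitionRatio_le ha n x
  refine ⟨by linarith [hpos n y], ?_⟩
  have hLC : (L : ℝ) ≤ C := NNReal.coe_le_coe.2 (le_self_add.trans hC)
  have hexp := Real.add_one_le_exp (-(4 * C * dist x y))
  have hlam : (lam : ℝ) ^ n ≤ 1 := pow_le_one₀ lam.coe_nonneg h.lt_one.le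
  calc partitionRatio ψ φ n x - partitionRatio ψ φ n y
      ≤ (1 - Real.exp (-(4 * C * dist x y))) * a + lam ^ n * (a * L) * dist x y :=
        h.partitionRatio_sub_le hC (n := 0) (by positivity) (h.oscLipLE_partitionRatio_zero ha) x y
    _ ≤ 4 * C * dist x y * a + 1 * (a * C) * dist x y := by gcongr; linarith
    _ ≤ 16 * C * a * dist x y := by
        have : 0 ≤ C * a * dist x y := by positivity
        linarith

theorem oscLipLE_partitionRatio_add (h : IsContractingIFS lam L ψ φ) (hC : L + C * lam ≤ C)
    {Δ : ℝ} (hΔ : ∀ x y : X, dist x y ≤ Δ) {m n : ℕ} (hm : (lam : ℝ) ^ m ≤ 1 / 4)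
    (hm' : (lam : ℝ) ^ m * (16 * C * Δ) ≤ Real.exp (-(4 * C * Δ)) / 2) {a : ℝ} (ha : 0 ≤ a)
    (hn : OscLipLE (partitionRatio ψ φ n) a (16 * C * a)) :
    OscLipLE (partitionRatio ψ φ (m + n)) ((1 - Real.exp (-(4 * C * Δ)) / 2) * a)
      (16 * C * ((1 - Real.exp (-(4 * C * Δ)) / 2) * a)) := by
  intro x y
  have hd := hΔ x y
  have hd0 : 0 ≤ dist x y := dist_nonneg
  have hδ : Real.exp (-(4 * C * Δ)) ≤ 1 :=
    Real.exp_le_one_iff.2 (neg_nonpos.2 (mul_nonneg (by positivity) (hd0.trans hd)))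
  have key := h.partitionRatio_sub_le hC (m := m) (by positivity) hn x y
  constructor
  · calc partitionRatio ψ φ (m + n) x - partitionRatio ψ φ (m + n) y
        ≤ (1 - Real.exp (-(4 * C * dist x y))) * a + lam ^ m * (16 * C * a) * dist x y := key
      _ ≤ (1 - Real.exp (-(4 * C * Δ))) * a + lam ^ m * (16 * C * a) * Δ := by gcongr
      _ = (1 - Real.exp (-(4 * C * Δ)) + lam ^ m * (16 * C * Δ)) * a := by ring
      _ ≤ (1 - Real.exp (-(4 * C * Δ)) / 2) * a := by gcongr; linarith
  · have hexp := Real.add_one_le_exp (-(4 * C * dist x y))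
    calc partitionRatio ψ φ (m + n) x - partitionRatio ψ φ (m + n) y
        ≤ (1 - Real.exp (-(4 * C * dist x y))) * a + lam ^ m * (16 * C * a) * dist x y := key
      _ ≤ 4 * C * dist x y * a + 1 / 4 * (16 * C * a) * dist x y := by gcongr; linarith
      _ = 16 * C * (1 / 2 * a) * dist x y := by ring
      _ ≤ 16 * C * ((1 - Real.exp (-(4 * C * Δ)) / 2) * a) * dist x y := by gcongr; linarith

end IsContractingIFS

theorem abs_partitionRatio_succ_sub_le {n : ℕ} {a l : ℝ}
    (hn : OscLipLE (partitionRatio ψ φ n) a l) (x : X) :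
    |partitionRatio ψ φ (n + 1) x - partitionRatio ψ φ n x| ≤ a := by
  rw [add_comm, abs_le]
  constructor
  · have := le_partitionRatio (c := partitionRatio ψ φ n x - a)
      (fun z => by linarith [(hn x z).1]) 1 x
    linarith
  · have := partitionRatio_le (c := partitionRatio ψ φ n x + a)
      (fun z => by linarith [(hn z x).1]) 1 x
    linarith

theorem exists_add_mul_le_self (hlam : lam < 1) (L : ℝ≥0) : ∃ C : ℝ≥0, L + C * lam ≤ C := by
  have hpos : 0 < 1 - lam := tsub_pos_of_lt hlam
  refine ⟨L / (1 - lam), le_of_eq ?_⟩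
  calc L + L / (1 - lam) * lam = L / (1 - lam) * (1 - lam + lam) := by
        rw [mul_add, div_mul_cancel₀ _ hpos.ne']
    _ = L / (1 - lam) := by rw [tsub_add_cancel_of_le hlam.le, mul_one]

theorem exists_abs_partitionRatio_succ_sub_le (hlam : lam < 1) (L : ℝ≥0) {Δ : ℝ}
    (hΔ : ∀ x y : X, dist x y ≤ Δ) : ∃ (m : ℕ) (θ : ℝ), m ≠ 0 ∧ 0 ≤ θ ∧ θ < 1 ∧
      ∀ {ψ : ι → X → X} {φ : ι → X → ℝ}, IsContractingIFS lam L ψ φ →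
      ∀ {a : ℝ}, (∀ x, partitionRatio ψ φ 0 x ≤ a) → ∀ n x,
      |partitionRatio ψ φ (n + 1) x - partitionRatio ψ φ n x| ≤ a * θ ^ (n / m) := by
  obtain ⟨C, hC⟩ := exists_add_mul_le_self hlam L
  set δ := Real.exp (-(4 * C * |Δ|))
  have hδ0 : 0 < δ := Real.exp_pos _
  have hδ1 : δ ≤ 1 := Real.exp_le_one_iff.2 (neg_nonpos.2 (by positivity))
  have hpow : Tendsto (fun m => (lam : ℝ) ^ m) atTop (𝓝 0) :=
    tendsto_pow_atTop_nhds_zero_of_lt_one lam.coe_nonneg hlam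
  have hpow' := hpow.mul_const (16 * C * |Δ|)
  rw [zero_mul] at hpow'
  obtain ⟨m, hm, hm', hm1⟩ := ((hpow.eventually_le_const (by norm_num : (0 : ℝ) < 1 / 4)).and
    ((hpow'.eventually_le_const (half_pos hδ0)).and (eventually_ge_atTop 1))).exists
  refine ⟨m, 1 - δ / 2, by lia, by linarith, by linarith, fun {ψ φ} h {a} ha n x => ?_⟩
  have ha0 : 0 ≤ a := (partitionRatio_pos 0 x).le.trans (ha x)
  have hdecay : ∀ k j, OscLipLE (partitionRatio ψ φ (m * k + j)) ((1 - δ / 2) ^ k * a)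
      (16 * C * ((1 - δ / 2) ^ k * a)) := by
    intro k j
    induction k with
    | zero => simpa only [mul_zero, zero_add, pow_zero, one_mul] using
        h.oscLipLE_partitionRatio hC ha j
    | succ k ih =>
      rw [mul_add_one, add_comm (m * k) m, add_assoc, pow_succ', mul_assoc]
      exact h.oscLipLE_partitionRatio_add hC (fun x y => (hΔ x y).trans (le_abs_self Δ)) hm hm'
        (mul_nonneg (pow_nonneg (by linarith) k) ha0) ih
  have hn := hdecay (n / m) (n % m)
  rw [Nat.div_add_mod, mul_comm _ a] at hn
  exact abs_partitionRatio_succ_sub_le hn x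

end RatioContraction

/-! ### Derivatives along orbits of a parametrized iterated function system -/

section Graph

variable {E F G : Type*} [NormedAddCommGroup E] [NormedSpace ℝ E] [NormedAddCommGroup F]
  [NormedSpace ℝ F] [NormedAddCommGroup G] [NormedSpace ℝ G]

theorem norm_iteratedFDeriv_fun_id_le {l : ℕ} (hl : l ≠ 0) (t : E) :
    ‖iteratedFDeriv ℝ l (fun s : E => s) t‖ ≤ 1 := by
  obtain ⟨l, rfl⟩ := Nat.exists_eq_succ_of_ne_zero hl
  have hfd : fderiv ℝ (fun s : E => s) = fun _ => ContinuousLinearMap.id ℝ E :=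
    funext fun _ => fderiv_fun_id
  rw [Nat.succ_eq_add_one, ← norm_iteratedFDeriv_fderiv, hfd]
  rcases eq_or_ne l 0 with rfl | hl
  · rw [norm_iteratedFDeriv_zero]
    exact ContinuousLinearMap.norm_id_le
  · rw [iteratedFDeriv_const_of_ne hl, Pi.zero_apply, norm_zero]
    exact zero_le_one

theorem norm_iteratedFDeriv_graph_le {z : E → G} {l : ℕ} (hz : ContDiff ℝ l z) (hl : l ≠ 0)
    {t : E} {c : ℝ} (hc : ‖iteratedFDeriv ℝ l z t‖ ≤ c) :
    ‖iteratedFDeriv ℝ l (fun s => (s, z s)) t‖ ≤ 1 + c := by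
  rw [iteratedFDeriv_prodMk (f := fun s : E => s) contDiff_fun_id.contDiffAt hz.contDiffAt le_rfl,
    ContinuousMultilinearMap.opNorm_prod]
  have hc0 : 0 ≤ c := (norm_nonneg _).trans hc
  exact max_le ((norm_iteratedFDeriv_fun_id_le hl t).trans (le_add_of_nonneg_right hc0))
    (hc.trans (le_add_of_nonneg_left zero_le_one))

theorem norm_iteratedFDeriv_comp_graph_le {f : E × G → F} {z : E → G} {m : ℕ}
    (hf : ContDiff ℝ m f) (hz : ContDiff ℝ m z) {t : E} {B c : ℝ}
    (hB : ∀ l ≤ m, ‖iteratedFDeriv ℝ l f (t, z t)‖ ≤ B)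
    (hc : ∀ l, 1 ≤ l → l ≤ m → ‖iteratedFDeriv ℝ l z t‖ ≤ c) :
    ‖iteratedFDeriv ℝ m (fun s => f (s, z s)) t‖ ≤ m.factorial * B * (1 + c) ^ m := by
  refine norm_iteratedFDeriv_comp_le hf (contDiff_id.prodMk hz) le_rfl t hB fun l hl1 hlm => ?_
  have hc0 : 0 ≤ c := (norm_nonneg _).trans (hc l hl1 hlm)
  exact (norm_iteratedFDeriv_graph_le (hz.of_le (by exact_mod_cast hlm)) (by lia)
    (hc l hl1 hlm)).trans (le_self_pow₀ (by linarith) (by lia))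

theorem fderiv_comp_graph {f : E × G → F} {z : E → G} (hf : Differentiable ℝ f)
    (hz : Differentiable ℝ z) (t : E) :
    fderiv ℝ (fun s => f (s, z s)) t = fderiv ℝ f (t, z t) ∘L .inl ℝ E G
      + (fderiv ℝ f (t, z t) ∘L .inr ℝ E G) ∘L fderiv ℝ z t := by
  have hgraph : HasFDerivAt (fun s => (s, z s))
      ((ContinuousLinearMap.id ℝ E).prod (fderiv ℝ z t)) t :=
    (hasFDerivAt_id t).prodMk (hz t).hasFDerivAt
  refine ((hf (t, z t)).hasFDerivAt.comp t hgraph).fderiv.trans ?_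
  ext v
  simp only [ContinuousLinearMap.comp_apply, ContinuousLinearMap.prod_apply, add_apply,
    ContinuousLinearMap.inl_apply, ContinuousLinearMap.inr_apply, ← map_add, Prod.mk_add_mk,
    add_zero, zero_add, ContinuousLinearMap.id_apply]

theorem norm_iteratedFDeriv_fderiv_comp_clm_le {f : E → F} {m : ℕ} (hf : ContDiff ℝ (m + 1 : ℕ) f)
    {j : G →L[ℝ] E} (hj : ‖j‖ ≤ 1) (p : E) :
    ‖iteratedFDeriv ℝ m (fun p => fderiv ℝ f p ∘L j) p‖ ≤ ‖iteratedFDeriv ℝ (m + 1) f p‖ := by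
  have hΛ : ‖(ContinuousLinearMap.compL ℝ G E F).flip j‖ ≤ 1 :=
    ((ContinuousLinearMap.compL ℝ G E F).flip.le_of_opNorm_le
      ((ContinuousLinearMap.opNorm_flip _).trans_le (ContinuousLinearMap.norm_compL_le ℝ G E F))
      j).trans (by rwa [one_mul])
  have hfd : ContDiff ℝ m (fderiv ℝ f) := hf.fderiv_right (by norm_cast)
  refine (((ContinuousLinearMap.compL ℝ G E F).flip j).norm_iteratedFDeriv_comp_left
    hfd.contDiffAt le_rfl).trans ?_
  rw [norm_iteratedFDeriv_fderiv]
  exact mul_le_of_le_one_left (norm_nonneg _) hΛ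

theorem norm_fderiv_comp_inr_le {f : E × G → F} (hf : Differentiable ℝ f) {κ : ℝ≥0} {t : E}
    (hκ : LipschitzWith κ fun y => f (t, y)) (y : G) :
    ‖fderiv ℝ f (t, y) ∘L .inr ℝ E G‖ ≤ κ :=
  ((hf (t, y)).hasFDerivAt.comp y (hasFDerivAt_prodMk_right t y)).le_of_lipschitz hκ

theorem sum_choose_succ_mul_mul_le {m : ℕ} {a b : ℕ → ℝ} {A c : ℝ} (hb : ∀ i < m, 0 ≤ b i)
    (haA : ∀ i < m, a i ≤ A) (hbc : ∀ i < m, b i ≤ c) (hA : 0 ≤ A) (hc : 0 ≤ c) :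
    ∑ i ∈ Finset.range m, (m.choose (i + 1) : ℝ) * a i * b i ≤ 2 ^ m * (A * c) := by
  have hsum : ∑ i ∈ Finset.range m, (m.choose (i + 1) : ℝ) ≤ 2 ^ m := by
    have h := Nat.sum_range_choose m
    rw [Finset.sum_range_succ'] at h
    exact_mod_cast h ▸ Nat.le_add_right _ _
  calc ∑ i ∈ Finset.range m, (m.choose (i + 1) : ℝ) * a i * b i
      ≤ ∑ i ∈ Finset.range m, (m.choose (i + 1) : ℝ) * (A * c) := by
        refine Finset.sum_le_sum fun i hi => ?_
        have him := Finset.mem_range.1 hi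
        rw [mul_assoc]
        exact mul_le_mul_of_nonneg_left (mul_le_mul (haA i him) (hbc i him) (hb i him) hA)
          (Nat.cast_nonneg _)
    _ ≤ 2 ^ m * (A * c) := by
        rw [← Finset.sum_mul]
        exact mul_le_mul_of_nonneg_right hsum (mul_nonneg hA hc)

theorem norm_iteratedFDeriv_fderiv_comp_graph_le {H : Type*} [NormedAddCommGroup H]
    [NormedSpace ℝ H] {f : E × G → F} {z : E → G} {m k : ℕ} (hf : ContDiff ℝ (m + 1 : ℕ) f)
    (hz : ContDiff ℝ m z) {j : H →L[ℝ] E × G} (hj : ‖j‖ ≤ 1) {t : E} {C c : ℝ} (hc0 : 0 ≤ c)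
    (hC : ∀ l ≤ m + 1, ‖iteratedFDeriv ℝ l f (t, z t)‖ ≤ C)
    (hc : ∀ l, 1 ≤ l → l ≤ m → ‖iteratedFDeriv ℝ l z t‖ ≤ c) (hk : k ≤ m) :
    ‖iteratedFDeriv ℝ k (fun s => fderiv ℝ f (s, z s) ∘L j) t‖ ≤
      m.factorial * C * (1 + c) ^ m := by
  have hC0 : 0 ≤ C := (norm_nonneg _).trans (hC 0 (by lia))
  have hfd : ContDiff ℝ k (fderiv ℝ f) := hf.fderiv_right (by norm_cast; lia)
  have hfj : ∀ l ≤ k, ‖iteratedFDeriv ℝ l (fun p => fderiv ℝ f p ∘L j) (t, z t)‖ ≤ C :=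
    fun l hl => (norm_iteratedFDeriv_fderiv_comp_clm_le
      (hf.of_le (by norm_cast; lia)) hj _).trans (hC _ (by lia))
  refine (norm_iteratedFDeriv_comp_graph_le (hfd.clm_comp contDiff_const)
    (hz.of_le (by norm_cast)) hfj fun l hl hlk => hc l hl (hlk.trans hk)).trans ?_
  gcongr
  linarith

theorem norm_iteratedFDeriv_clm_comp_le {H : Type*} [NormedAddCommGroup H] [NormedSpace ℝ H]
    {A : E → G →L[ℝ] F} {B : E → H →L[ℝ] G} {m : ℕ}
    (hA : ContDiff ℝ m A) (hB : ContDiff ℝ m B) {t : E} {a c κ : ℝ}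
    (ha : ∀ k ≤ m, ‖iteratedFDeriv ℝ k A t‖ ≤ a) (hc0 : 0 ≤ c)
    (hc : ∀ k < m, ‖iteratedFDeriv ℝ k B t‖ ≤ c) (hκ : ‖A t‖ ≤ κ) :
    ‖iteratedFDeriv ℝ m (fun s => A s ∘L B s) t‖ ≤
      2 ^ m * (a * c) + κ * ‖iteratedFDeriv ℝ m B t‖ := by
  have ha0 : 0 ≤ a := (norm_nonneg _).trans (ha m le_rfl)
  have hleibniz := (ContinuousLinearMap.compL ℝ H G F).norm_iteratedFDeriv_le_of_bilinear_of_le_one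
    hA hB t le_rfl (ContinuousLinearMap.norm_compL_le ℝ H G F)
  rw [Finset.sum_range_succ', Nat.choose_zero_right, Nat.cast_one, one_mul, Nat.sub_zero,
    norm_iteratedFDeriv_zero] at hleibniz
  exact hleibniz.trans (add_le_add
    (sum_choose_succ_mul_mul_le (fun _ _ => norm_nonneg _) (fun i hi => ha _ hi)
      (fun i hi => hc _ (by lia)) ha0 hc0)
    (mul_le_mul_of_nonneg_right hκ (norm_nonneg _)))

/-- The top order derivative of `z` only enters through the fibre derivative of `f`, hence with
the factor `κ`; all other terms of the Leibniz rule are controlled by lower order derivatives. -/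
theorem norm_iteratedFDeriv_succ_comp_graph_le {f : E × G → F} {z : E → G} {m : ℕ}
    (hf : ContDiff ℝ (m + 1 : ℕ) f) (hz : ContDiff ℝ (m + 1 : ℕ) z) {t : E} {C c κ : ℝ}
    (hC : ∀ l ≤ m + 1, ‖iteratedFDeriv ℝ l f (t, z t)‖ ≤ C) (hc0 : 0 ≤ c)
    (hc : ∀ l, 1 ≤ l → l ≤ m → ‖iteratedFDeriv ℝ l z t‖ ≤ c)
    (hκ : ‖fderiv ℝ f (t, z t) ∘L .inr ℝ E G‖ ≤ κ) :
    ‖iteratedFDeriv ℝ (m + 1) (fun s => f (s, z s)) t‖ ≤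
      m.factorial * C * (1 + c) ^ m * (1 + 2 ^ m * c) + κ * ‖iteratedFDeriv ℝ (m + 1) z t‖ := by
  have hz' : ContDiff ℝ m z := hz.of_le (by norm_cast; lia)
  have hdz : ContDiff ℝ m (fderiv ℝ z) := hz.fderiv_right (by norm_cast)
  have hdf : ContDiff ℝ m fun s => fderiv ℝ f (s, z s) :=
    (hf.fderiv_right (by norm_cast)).comp (contDiff_id.prodMk hz')
  have hbase : ContDiff ℝ m fun s => fderiv ℝ f (s, z s) ∘L .inl ℝ E G :=
    hdf.clm_comp contDiff_const
  have hfibre : ContDiff ℝ m fun s => fderiv ℝ f (s, z s) ∘L .inr ℝ E G :=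
    hdf.clm_comp contDiff_const
  have hbase_le := norm_iteratedFDeriv_fderiv_comp_graph_le hf hz'
    (ContinuousLinearMap.norm_inl_le_one ℝ E G) hc0 hC hc le_rfl
  have hfibre_le := norm_iteratedFDeriv_clm_comp_le hfibre hdz
    (fun k => norm_iteratedFDeriv_fderiv_comp_graph_le hf hz'
      (ContinuousLinearMap.norm_inr_le_one ℝ E G) hc0 hC hc) hc0
    (fun k hk => norm_iteratedFDeriv_fderiv.trans_le (hc _ (by lia) hk)) hκ
  have hadd := fun_iteratedFDeriv_add_apply (x := t) hbase.contDiffAt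
    (hfibre.clm_comp hdz).contDiffAt
  rw [← norm_iteratedFDeriv_fderiv, funext (fderiv_comp_graph (hf.differentiable (by simp))
    (hz.differentiable (by simp))), hadd, ← norm_iteratedFDeriv_fderiv (f := z)]
  linarith [norm_add_le_of_le hbase_le hfibre_le]

end Graph

/-! ### Smooth families of iterated function systems -/

/-- The map of the total space `E × G` which fixes the parameter and acts on the fibre over `t`
by `y ↦ f (t, y)`. -/
def skewProduct {E G : Type*} (f : E × G → G) (p : E × G) : E × G := (p.1, f p)

/-- The orbits of the constant curve `y₀` under the branches of a parametrized iterated function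
system, as functions of the parameter. -/
inductive IsOrbitCurve {E G ι : Type*} (ψ : ι → E × G → G) (y₀ : G) : (E → G) → Prop
  | base : IsOrbitCurve ψ y₀ fun _ => y₀
  | step (i : ι) {z : E → G} (hz : IsOrbitCurve ψ y₀ z) : IsOrbitCurve ψ y₀ fun t => ψ i (t, z t)

/-- A family of iterated function systems on the subset `s` of a normed space, depending in a
`C^K` way on a parameter in `E`. In each fibre the branches contract by the factor `lam` and the
logarithmic weights are Lipschitz with constant `L`; the constant `C` bounds all joint derivatives
of order at most `K` over `s`. -/
structure IsSmoothIFSFamily {E G ι : Type*} [NormedAddCommGroup E] [NormedSpace ℝ E]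
    [NormedAddCommGroup G] [NormedSpace ℝ G] (K : ℕ) (s : Set G) (lam L C : ℝ≥0)
    (ψ : ι → E × G → G) (φ : ι → E × G → ℝ) : Prop where
  lt_one : lam < 1
  contDiff_map : ∀ i, ContDiff ℝ K (ψ i)
  contDiff_weight : ∀ i, ContDiff ℝ K (φ i)
  mapsTo : ∀ i t, MapsTo (fun y => ψ i (t, y)) s s
  lipschitz_map : ∀ i t, LipschitzWith lam fun y => ψ i (t, y)
  lipschitz_weight : ∀ i t, LipschitzWith L fun y => φ i (t, y)
  norm_map_le : ∀ i, ∀ l ≤ K, ∀ t, ∀ y ∈ s, ‖iteratedFDeriv ℝ l (ψ i) (t, y)‖ ≤ C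
  norm_weight_le : ∀ i, ∀ l ≤ K, ∀ t, ∀ y ∈ s, ‖iteratedFDeriv ℝ l (φ i) (t, y)‖ ≤ C

theorem abs_log_sub_log_le {x y c : ℝ} (hc : 0 < c) (hx : c ≤ x) (hy : c ≤ y) :
    |Real.log x - Real.log y| ≤ |x - y| / c := by
  have hle : ∀ {x y : ℝ}, c ≤ x → c ≤ y → Real.log x - Real.log y ≤ |x - y| / c := by
    intro x y hx hy
    have hx0 := hc.trans_le hx
    have hy0 := hc.trans_le hy
    calc Real.log x - Real.log y = Real.log (x / y) := (Real.log_div hx0.ne' hy0.ne').symm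
      _ ≤ x / y - 1 := Real.log_le_sub_one_of_pos (div_pos hx0 hy0)
      _ = (x - y) / y := by rw [sub_div, div_self hy0.ne']
      _ ≤ |x - y| / c := div_le_div₀ (abs_nonneg _) (le_abs_self _) hc hy
  exact abs_sub_le_iff.2 ⟨hle hx hy, abs_sub_comm x y ▸ hle hy hx⟩

namespace IsSmoothIFSFamily

variable {E G ι : Type*} [NormedAddCommGroup E] [NormedSpace ℝ E] [NormedAddCommGroup G]
  [NormedSpace ℝ G] {K : ℕ} {s : Set G} {y₀ : G} {lam L C : ℝ≥0} {ψ : ι → E × G → G}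
  {φ : ι → E × G → ℝ} {z : E → G}

theorem contDiff_orbitCurve (h : IsSmoothIFSFamily K s lam L C ψ φ) (hz : IsOrbitCurve ψ y₀ z) :
    ContDiff ℝ K z := by
  induction hz with
  | base => exact contDiff_const
  | step i _ ih => exact (h.contDiff_map i).comp (contDiff_id.prodMk ih)

theorem orbitCurve_mem (h : IsSmoothIFSFamily K s lam L C ψ φ) (hy₀ : y₀ ∈ s)
    (hz : IsOrbitCurve ψ y₀ z) (t : E) : z t ∈ s := by
  induction hz with
  | base => exact hy₀
  | step i _ ih => exact h.mapsTo i t ih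

theorem norm_iteratedFDeriv_succ_orbitCurve_le (h : IsSmoothIFSFamily K s lam L C ψ φ)
    (hy₀ : y₀ ∈ s) {m : ℕ} (hm : m + 1 ≤ K) {c : ℝ} (hc0 : 0 ≤ c)
    (hc : ∀ l, 1 ≤ l → l ≤ m → ∀ z, IsOrbitCurve ψ y₀ z → ∀ t, ‖iteratedFDeriv ℝ l z t‖ ≤ c)
    (hz : IsOrbitCurve ψ y₀ z) (t : E) :
    ‖iteratedFDeriv ℝ (m + 1) z t‖ ≤
      m.factorial * C * (1 + c) ^ m * (1 + 2 ^ m * c) / (1 - lam) := by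
  have hlam : 0 < 1 - (lam : ℝ) := sub_pos.2 (by exact_mod_cast h.lt_one)
  have hmK : ((m + 1 : ℕ) : WithTop ℕ∞) ≤ K := by exact_mod_cast hm
  induction hz with
  | base =>
    rw [iteratedFDeriv_const_of_ne (by lia), Pi.zero_apply, norm_zero]
    positivity
  | @step i z hz ih =>
    have hstep := norm_iteratedFDeriv_succ_comp_graph_le ((h.contDiff_map i).of_le hmK)
      ((h.contDiff_orbitCurve hz).of_le hmK)
      (fun l hl => h.norm_map_le i l (hl.trans hm) t _ (h.orbitCurve_mem hy₀ hz t)) hc0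
      (fun l hl hlm => hc l hl hlm z hz t)
      (norm_fderiv_comp_inr_le (((h.contDiff_map i).of_le hmK).differentiable (by simp))
        (h.lipschitz_map i t) _)
    rw [le_div_iff₀ hlam] at ih ⊢
    nlinarith [lam.coe_nonneg]

theorem exists_norm_iteratedFDeriv_orbitCurve_le (h : IsSmoothIFSFamily K s lam L C ψ φ)
    (hy₀ : y₀ ∈ s) : ∃ c : ℝ, 0 ≤ c ∧ ∀ l, 1 ≤ l → l ≤ K → ∀ z, IsOrbitCurve ψ y₀ z → ∀ t,
      ‖iteratedFDeriv ℝ l z t‖ ≤ c := by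
  suffices hm : ∀ m ≤ K, ∃ c : ℝ, 0 ≤ c ∧ ∀ l, 1 ≤ l → l ≤ m → ∀ z, IsOrbitCurve ψ y₀ z → ∀ t,
      ‖iteratedFDeriv ℝ l z t‖ ≤ c from hm K le_rfl
  intro m
  induction m with
  | zero => exact fun _ => ⟨0, le_rfl, fun l hl hl0 => by lia⟩
  | succ m ih =>
    intro hm
    obtain ⟨c, hc0, hc⟩ := ih (by lia)
    refine ⟨max c (m.factorial * C * (1 + c) ^ m * (1 + 2 ^ m * c) / (1 - lam)),
      le_max_of_le_left hc0, fun l hl hlm z hz t => ?_⟩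
    rcases Nat.le_or_eq_of_le_succ hlm with hlm | rfl
    · exact (hc l hl hlm z hz t).trans (le_max_left _ _)
    · exact (h.norm_iteratedFDeriv_succ_orbitCurve_le hy₀ hm hc0 hc hz t).trans (le_max_right _ _)

theorem contDiff_wordWeight (h : IsSmoothIFSFamily K s lam L C ψ φ) (n : ℕ) (w : Fin n → ι)
    (hz : IsOrbitCurve ψ y₀ z) :
    ContDiff ℝ K fun t => wordWeight (fun i => skewProduct (ψ i)) φ n w (t, z t) := by
  induction n generalizing z with
  | zero => exact contDiff_const
  | succ n ih =>
    exact ((h.contDiff_weight (w 0)).comp (contDiff_id.prodMk (h.contDiff_orbitCurve hz))).add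
      (ih (Fin.tail w) (hz.step (w 0)))

theorem norm_iteratedFDeriv_wordWeight_le (h : IsSmoothIFSFamily K s lam L C ψ φ) (hy₀ : y₀ ∈ s)
    {l : ℕ} (hl : l ≤ K) {c : ℝ}
    (hc : ∀ i, 1 ≤ i → i ≤ l → ∀ z, IsOrbitCurve ψ y₀ z → ∀ t, ‖iteratedFDeriv ℝ i z t‖ ≤ c)
    (n : ℕ) (w : Fin n → ι) (hz : IsOrbitCurve ψ y₀ z) (t : E) :
    ‖iteratedFDeriv ℝ l (fun t => wordWeight (fun i => skewProduct (ψ i)) φ n w (t, z t)) t‖ ≤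
      n * (l.factorial * C * (1 + c) ^ l) := by
  have hlK : (l : WithTop ℕ∞) ≤ K := by exact_mod_cast hl
  induction n generalizing z with
  | zero =>
    simp only [wordWeight, iteratedFDeriv_fun_zero, Pi.zero_apply, norm_zero, Nat.cast_zero,
      zero_mul, le_refl]
  | succ n ih =>
    have hfirst : ContDiff ℝ l fun t => φ (w 0) (t, z t) :=
      ((h.contDiff_weight (w 0)).comp (contDiff_id.prodMk (h.contDiff_orbitCurve hz))).of_le hlK
    have htail := (h.contDiff_wordWeight n (Fin.tail w) (hz.step (w 0))).of_le hlK
    have hadd := fun_iteratedFDeriv_add_apply (x := t) hfirst.contDiffAt htail.contDiffAt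
    refine (congrArg norm hadd).trans_le ((norm_add_le _ _).trans ?_)
    have hfirst_le := norm_iteratedFDeriv_comp_graph_le ((h.contDiff_weight (w 0)).of_le hlK)
      ((h.contDiff_orbitCurve hz).of_le hlK)
      (fun k hk => h.norm_weight_le (w 0) k (hk.trans hl) t _ (h.orbitCurve_mem hy₀ hz t))
      (fun k hk hkl => hc k hk hkl z hz t)
    have htail_le := ih (Fin.tail w) (hz.step (w 0))
    push_cast
    linarith

/-- The branch `ψ i` over the parameter `t`, as a self-map of `s`. -/
def fibreMap (h : IsSmoothIFSFamily K s lam L C ψ φ) (t : E) (i : ι) : s → s :=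
  (h.mapsTo i t).restrict

/-- The logarithmic weight `φ i` over the parameter `t`, as a function on `s`. -/
def fibreWeight (_h : IsSmoothIFSFamily K s lam L C ψ φ) (t : E) (i : ι) (y : s) : ℝ :=
  φ i (t, y)

theorem isContractingIFS_fibre (h : IsSmoothIFSFamily K s lam L C ψ φ) (t : E) :
    IsContractingIFS lam L (h.fibreMap t) (h.fibreWeight t) where
  lt_one := h.lt_one
  lipschitz_map i := LipschitzWith.of_dist_le_mul fun x y => (h.lipschitz_map i t).dist_le_mul x y
  lipschitz_weight i :=
    LipschitzWith.of_dist_le_mul fun x y => (h.lipschitz_weight i t).dist_le_mul x y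

theorem abs_fibreWeight_le (h : IsSmoothIFSFamily K s lam L C ψ φ) (t : E) (i : ι) (y : s) :
    |h.fibreWeight t i y| ≤ C := by
  have hC := h.norm_weight_le i 0 (by lia) t y y.2
  rwa [norm_iteratedFDeriv_zero, Real.norm_eq_abs] at hC

variable [Fintype ι]

theorem partitionRatio_fibre (h : IsSmoothIFSFamily K s lam L C ψ φ) (t : E) (n : ℕ) (y : s) :
    partitionRatio (fun i => skewProduct (ψ i)) φ n (t, y)
      = partitionRatio (h.fibreMap t) (h.fibreWeight t) n y := by
  have hcomp := fun n => partitionFun_comp (ψ := h.fibreMap t) (φ := h.fibreWeight t)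
    (ψ' := fun i => skewProduct (ψ i)) (φ' := φ) (h := fun y : s => (t, (y : G)))
    (fun _ _ => rfl) (fun _ _ => rfl) n y
  simp only [partitionRatio, hcomp]

theorem partitionRatio_fibre_zero_le (h : IsSmoothIFSFamily K s lam L C ψ φ) (t : E) (y : s) :
    partitionRatio (h.fibreMap t) (h.fibreWeight t) 0 y ≤ Fintype.card ι * Real.exp C := by
  rw [partitionRatio_zero, ← nsmul_eq_mul]
  exact Finset.sum_le_card_nsmul _ _ _ fun i _ =>
    Real.exp_le_exp.2 ((le_abs_self _).trans (h.abs_fibreWeight_le t i y))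

variable [Nonempty ι]

theorem contDiff_log_partitionFun (h : IsSmoothIFSFamily K s lam L C ψ φ) (y₀ : G) (n : ℕ) :
    ContDiff ℝ K fun t => Real.log (partitionFun (fun i => skewProduct (ψ i)) φ n (t, y₀)) := by
  refine ContDiff.log ?_ fun t => (partitionFun_pos n _).ne'
  simp only [partitionFun_eq_sum_word]
  exact ContDiff.sum fun w _ => (h.contDiff_wordWeight n w .base).exp

theorem polynomiallyBounded_iteratedFDeriv_log_partitionFun
    (h : IsSmoothIFSFamily K s lam L C ψ φ) (hy₀ : y₀ ∈ s) {l : ℕ} (hl : l ≠ 0) (hlK : l ≤ K) :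
    PolynomiallyBounded fun n => iteratedFDeriv ℝ l fun t =>
      Real.log (partitionFun (fun i => skewProduct (ψ i)) φ n (t, y₀)) := by
  obtain ⟨c, hc0, hc⟩ := h.exists_norm_iteratedFDeriv_orbitCurve_le hy₀
  obtain ⟨A, -, hA⟩ := exists_norm_iteratedFDeriv_log_sum_exp_le (E := E) l
  set M : ℝ := (l.factorial : ℝ) * C * (1 + c) ^ l
  have hM0 : 0 ≤ M := by positivity
  refine ⟨A * (1 + M) ^ l, l, fun n t => ?_⟩
  simp only [partitionFun_eq_sum_word]
  rw [mul_assoc, ← mul_pow]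
  have hn : (0 : ℝ) ≤ n := n.cast_nonneg
  refine hA (fun w => (h.contDiff_wordWeight n w .base).of_le (by exact_mod_cast hlK))
    (by nlinarith [hn]) (fun w i _ hil => ?_) hl
  calc _ ≤ n * (i.factorial * C * (1 + c) ^ i) :=
        h.norm_iteratedFDeriv_wordWeight_le hy₀ (hil.trans hlK)
          (fun k hk hki => hc k hk (hki.trans (hil.trans hlK))) n w .base t
    _ ≤ n * (l.factorial * C * (1 + c) ^ l) := by
        gcongr
        linarith
    _ ≤ (1 + M) * (n + 1) := by nlinarith [hn]

theorem exp_neg_le_partitionRatio_fibre_zero (h : IsSmoothIFSFamily K s lam L C ψ φ) (t : E)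
    (y : s) : Real.exp (-C) ≤ partitionRatio (h.fibreMap t) (h.fibreWeight t) 0 y := by
  obtain ⟨i⟩ := ‹Nonempty ι›
  rw [partitionRatio_zero]
  exact (Real.exp_le_exp.2 (abs_le.1 (h.abs_fibreWeight_le t i y)).1).trans
    (Finset.single_le_sum (f := fun i => Real.exp (h.fibreWeight t i y))
      (fun _ _ => (Real.exp_pos _).le) (Finset.mem_univ i))

theorem exp_neg_le_partitionRatio (h : IsSmoothIFSFamily K s lam L C ψ φ) (hy₀ : y₀ ∈ s) (n : ℕ)
    (t : E) : Real.exp (-C) ≤ partitionRatio (fun i => skewProduct (ψ i)) φ n (t, y₀) :=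
  (h.partitionRatio_fibre t n ⟨y₀, hy₀⟩).symm ▸
    le_partitionRatio (h.exp_neg_le_partitionRatio_fibre_zero t) n ⟨y₀, hy₀⟩

theorem partitionRatio_le_card_mul (h : IsSmoothIFSFamily K s lam L C ψ φ) (hy₀ : y₀ ∈ s) (n : ℕ)
    (t : E) :
    partitionRatio (fun i => skewProduct (ψ i)) φ n (t, y₀) ≤ Fintype.card ι * Real.exp C :=
  (h.partitionRatio_fibre t n ⟨y₀, hy₀⟩).symm ▸
    partitionRatio_le (h.partitionRatio_fibre_zero_le t) n ⟨y₀, hy₀⟩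

theorem rapidlyDecaying_log_partitionRatio (h : IsSmoothIFSFamily K s lam L C ψ φ) (hy₀ : y₀ ∈ s)
    (hs : Bornology.IsBounded s) :
    RapidlyDecaying fun n t =>
      Real.log (partitionRatio (fun i => skewProduct (ψ i)) φ (n + 1) (t, y₀))
        - Real.log (partitionRatio (fun i => skewProduct (ψ i)) φ n (t, y₀)) := by
  obtain ⟨Δ, hΔ⟩ := Metric.isBounded_iff.1 hs
  obtain ⟨m, θ, hm, hθ0, hθ1, hθ⟩ := exists_abs_partitionRatio_succ_sub_le (X := s) (ι := ι)
    h.lt_one L (Δ := Δ) fun x y => hΔ x.2 y.2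
  refine .of_geometric (a := Fintype.card ι * Real.exp C / Real.exp (-C)) (by positivity) hθ0 hθ1
    hm fun n t => ?_
  have hdiff := hθ (h.isContractingIFS_fibre t) (h.partitionRatio_fibre_zero_le t) n ⟨y₀, hy₀⟩
  rw [← h.partitionRatio_fibre, ← h.partitionRatio_fibre] at hdiff
  refine (abs_log_sub_log_le (Real.exp_pos _) (h.exp_neg_le_partitionRatio hy₀ _ t)
    (h.exp_neg_le_partitionRatio hy₀ _ t)).trans ?_
  rw [div_mul_eq_mul_div]
  gcongr

theorem polynomiallyBounded_iteratedFDeriv_log_partitionRatio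
    (h : IsSmoothIFSFamily K s lam L C ψ φ) (hy₀ : y₀ ∈ s) {l : ℕ} (hl : l ≤ K) :
    PolynomiallyBounded fun n => iteratedFDeriv ℝ l fun t =>
      Real.log (partitionRatio (fun i => skewProduct (ψ i)) φ n (t, y₀)) := by
  rcases eq_or_ne l 0 with rfl | hl0
  · refine ⟨C + |Real.log (Fintype.card ι * Real.exp C)|, 0, fun n t => ?_⟩
    have hlower := Real.log_le_log (Real.exp_pos _) (h.exp_neg_le_partitionRatio hy₀ n t)
    have hupper := Real.log_le_log (partitionRatio_pos n (t, y₀))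
      (h.partitionRatio_le_card_mul hy₀ n t)
    rw [Real.log_exp] at hlower
    rw [norm_iteratedFDeriv_zero, pow_zero, mul_one, Real.norm_eq_abs, abs_le]
    have habs := le_abs_self (Real.log (Fintype.card ι * Real.exp C))
    have habs0 := abs_nonneg (Real.log (Fintype.card ι * Real.exp C))
    exact ⟨by linarith, by linarith [C.coe_nonneg]⟩
  · have hsub : ∀ n t, iteratedFDeriv ℝ l (fun t =>
        Real.log (partitionRatio (fun i => skewProduct (ψ i)) φ n (t, y₀))) t
        = iteratedFDeriv ℝ l (fun t =>
            Real.log (partitionFun (fun i => skewProduct (ψ i)) φ (n + 1) (t, y₀))) t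
          - iteratedFDeriv ℝ l (fun t =>
            Real.log (partitionFun (fun i => skewProduct (ψ i)) φ n (t, y₀))) t := by
      intro n t
      simp only [log_partitionRatio]
      exact fun_iteratedFDeriv_sub_apply
        (((h.contDiff_log_partitionFun y₀ _).of_le (by exact_mod_cast hl)).contDiffAt)
        (((h.contDiff_log_partitionFun y₀ _).of_le (by exact_mod_cast hl)).contDiffAt)
    simpa only [PolynomiallyBounded, hsub] using
      (h.polynomiallyBounded_iteratedFDeriv_log_partitionFun hy₀ hl0 hl).sub_succ

theorem exists_contDiff_tendsto_log_partitionFun_div (h : IsSmoothIFSFamily K s lam L C ψ φ)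
    (hy₀ : y₀ ∈ s) (hs : Bornology.IsBounded s) : ∃ P : E → ℝ, ContDiff ℝ (K - 1 : ℕ) P ∧ ∀ t,
      Tendsto (fun n : ℕ => Real.log (partitionFun (fun i => skewProduct (ψ i)) φ n (t, y₀)) / n)
        atTop (𝓝 (P t)) := by
  have hcd : ∀ n, ContDiff ℝ K fun t =>
      Real.log (partitionRatio (fun i => skewProduct (ψ i)) φ n (t, y₀)) := fun n => by
    simp only [log_partitionRatio]
    exact (h.contDiff_log_partitionFun y₀ _).sub (h.contDiff_log_partitionFun y₀ _)
  obtain ⟨P, hP, hlim⟩ := exists_contDiff_tendsto_of_rapidlyDecaying hcd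
    (fun l hl => h.polynomiallyBounded_iteratedFDeriv_log_partitionRatio hy₀ hl)
    (h.rapidlyDecaying_log_partitionRatio hy₀ hs)
  exact ⟨P, hP, fun t => tendsto_log_partitionFun_div (hlim t)⟩

end IsSmoothIFSFamily

/-! ### Pressure and transfer operators of expanding circle maps -/

section CircleLift

variable {T S G : ℝ → ℝ} {d : ℤ}

theorem IsCircleLift.add_int (hT : IsCircleLift T d) (x : ℝ) (j : ℤ) : T (x + j) = T x + d * j := by
  induction j using Int.induction_on with
  | zero => rw [Int.cast_zero, add_zero, mul_zero, add_zero]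
  | succ j ih =>
    rw [Int.cast_add, Int.cast_one, ← add_assoc, hT, ih]
    ring
  | pred j ih =>
    have hstep := hT (x + ((-j - 1 : ℤ) : ℝ))
    rw [show x + ((-j - 1 : ℤ) : ℝ) + 1 = x + ((-j : ℤ) : ℝ) by push_cast; ring, ih] at hstep
    push_cast at hstep ⊢
    linarith

theorem IsCircleLift.degree_ne_zero (hT : IsCircleLift T d) (hinj : Function.Injective T) :
    d ≠ 0 := by
  rintro rfl
  have h01 : T (0 + 1) = T 0 := by rw [hT, Int.cast_zero, add_zero]
  exact one_ne_zero ((zero_add (1 : ℝ)).symm.trans (hinj h01))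

theorem IsCircleLift.iterate (hT : IsCircleLift T d) (n : ℕ) : IsCircleLift T^[n] (d ^ n) := by
  induction n with
  | zero => exact fun x => by rw [Function.iterate_zero, id, id, pow_zero, Int.cast_one]
  | succ n ih =>
    intro x
    rw [Function.iterate_succ_apply', ih, hT.add_int, Function.iterate_succ_apply', pow_succ']
    push_cast
    rfl

theorem periodic_add_int (hG : Function.Periodic G 1) (x : ℝ) (j : ℤ) : G (x + j) = G x := by
  simpa only [mul_one] using hG.int_mul j x

theorem birkhoff_add_int (hT : IsCircleLift T d) (hG : Function.Periodic G 1) (n : ℕ) (x : ℝ)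
    (j : ℤ) : birkhoff T G n (x + j) = birkhoff T G n x :=
  Finset.sum_congr rfl fun i _ => by
    rw [(hT.iterate i).add_int, ← Int.cast_mul, periodic_add_int hG]

theorem birkhoff_succ (n : ℕ) (x : ℝ) :
    birkhoff T G (n + 1) x = birkhoff T G n x + G (T^[n] x) :=
  Finset.sum_range_succ _ n

theorem birkhoff_succ_iterate (hTS : Function.LeftInverse T S) (n : ℕ) (z : ℝ) :
    birkhoff T G (n + 1) (S^[n + 1] z) = birkhoff T G n (S^[n] (S z)) + G (S z) := by
  rw [birkhoff_succ, Function.iterate_succ_apply, hTS.iterate n]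

/-- Representatives in `[0, 1)` of the preimages of the class of `y` under the `n`-th iterate of
the circle map with lift `T`. -/
def iteratePreimages (T : ℝ → ℝ) (n : ℕ) (y : ℝ) : Set ℝ :=
  {x | x ∈ Ico (0 : ℝ) 1 ∧ ∃ k : ℤ, T^[n] x = y + k}

/-- The points of `[0, 1)` at which the `n`-th iterate of `T` agrees with multiplication by `c`
modulo `1`. This interpolates between the periodic points, for `c = 1`, and the preimages of `0`,
for `c = 0`. -/
def coincidencePts (T : ℝ → ℝ) (n : ℕ) (c : ℤ) : Set ℝ :=
  {x | x ∈ Ico (0 : ℝ) 1 ∧ ∃ k : ℤ, T^[n] x = c * x + k}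

theorem coincidencePts_zero (n : ℕ) : coincidencePts T n 0 = iteratePreimages T n 0 := by
  simp only [coincidencePts, iteratePreimages, Int.cast_zero, zero_mul]

theorem coincidencePts_one (n : ℕ) : coincidencePts T n 1 = periodicPtsIn T n := by
  simp only [coincidencePts, periodicPtsIn, Int.cast_one, one_mul]

theorem iteratePreimages_order_zero (y : ℝ) : iteratePreimages T 0 y = {Int.fract y} := by
  ext x
  rw [mem_singleton_iff, eq_comm, Int.fract_eq_iff]
  refine ⟨fun ⟨hx, k, hk⟩ => ⟨hx.1, hx.2, -k, ?_⟩, fun ⟨h0, h1, k, hk⟩ => ⟨⟨h0, h1⟩, -k, ?_⟩⟩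
  · rw [Function.iterate_zero, id] at hk
    rw [hk]
    push_cast
    ring
  · rw [Function.iterate_zero, id]
    push_cast
    linarith

theorem fract_mem_coincidencePts (hT : IsCircleLift T d) {n : ℕ} {c k : ℤ} {q : ℝ}
    (hq : T^[n] q = c * q + k) : Int.fract q ∈ coincidencePts T n c := by
  refine ⟨⟨Int.fract_nonneg q, Int.fract_lt_one q⟩, k + (c - d ^ n) * ⌊q⌋, ?_⟩
  have hfract : Int.fract q = q + ((-⌊q⌋ : ℤ) : ℝ) := by
    rw [Int.fract]
    push_cast
    ring
  rw [hfract, (hT.iterate n).add_int, hq]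
  push_cast
  ring

end CircleLift

/-- A circle map with lift `T` of degree `d` and a `1`-periodic potential `G` with Lipschitz
constant `L`, such that the lift has an inverse `S` contracting by the factor `lam`. -/
structure IsCircleSystem (lam L : ℝ≥0) (d : ℤ) (T S G : ℝ → ℝ) : Prop where
  lt_one : lam < 1
  isCircleLift : IsCircleLift T d
  leftInverse : Function.LeftInverse S T
  rightInverse : Function.RightInverse S T
  lipschitz_inv : LipschitzWith lam S
  periodic : Function.Periodic G 1
  lipschitz_potential : LipschitzWith L G

/-- The lifts to `ℝ` of the inverse branches of a circle map of degree `d`, in terms of the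
inverse `S` of its lift. -/
def inverseBranch (S : ℝ → ℝ) (d : ℤ) (i : Fin d.natAbs) (y : ℝ) : ℝ := S (y + i)

/-- The potential at the endpoints of the inverse branches of a circle map. -/
def branchPotential (S G : ℝ → ℝ) (d : ℤ) (i : Fin d.natAbs) (y : ℝ) : ℝ := G (S (y + i))

namespace IsCircleSystem

variable {lam L : ℝ≥0} {d : ℤ} {T S G : ℝ → ℝ}

theorem degree_ne_zero (h : IsCircleSystem lam L d T S G) : d ≠ 0 :=
  h.isCircleLift.degree_ne_zero h.leftInverse.injective

theorem inv_add_mul_int (h : IsCircleSystem lam L d T S G) (y : ℝ) (j : ℤ) :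
    S (y + d * j) = S y + j := by
  rw [← h.leftInverse (S y + j), h.isCircleLift.add_int, h.rightInverse]

theorem iteratePreimages_succ (h : IsCircleSystem lam L d T S G) (n : ℕ) (y : ℝ) :
    iteratePreimages T (n + 1) y = ⋃ i, iteratePreimages T n (inverseBranch S d i y) := by
  ext x
  simp only [iteratePreimages, inverseBranch, mem_ofPred_eq, mem_iUnion,
    Function.iterate_succ_apply']
  constructor
  · rintro ⟨hx, k, hk⟩
    have hmod : 0 ≤ k % d := Int.emod_nonneg _ h.degree_ne_zero
    have hmod_lt : k % d < |d| := Int.emod_lt_abs _ h.degree_ne_zero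
    rw [Int.abs_eq_natAbs] at hmod_lt
    refine ⟨⟨(k % d).toNat, by lia⟩, hx, k / d, ?_⟩
    have hcast : (((k % d).toNat : ℕ) : ℝ) = ((k % d : ℤ) : ℝ) := by
      exact_mod_cast Int.toNat_of_nonneg hmod
    have hdiv : (k : ℝ) = ((k % d : ℤ) : ℝ) + d * ((k / d : ℤ) : ℝ) := by
      exact_mod_cast (Int.emod_add_mul_ediv k d).symm
    rw [← h.leftInverse (T^[n] x), hk, hdiv, ← add_assoc, h.inv_add_mul_int, hcast]
  · rintro ⟨i, hx, k, hk⟩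
    refine ⟨hx, i + d * k, ?_⟩
    rw [hk, h.isCircleLift.add_int, h.rightInverse]
    push_cast
    ring

theorem pairwise_disjoint_iteratePreimages (h : IsCircleSystem lam L d T S G) (n : ℕ) (y : ℝ) :
    Pairwise (Function.onFun Disjoint fun i => iteratePreimages T n (inverseBranch S d i y)) := by
  intro i j hij
  refine Set.disjoint_left.2 ?_
  rintro x ⟨_, k, hk⟩ ⟨_, k', hk'⟩
  refine hij (Fin.ext ?_)
  have hT : T (S (y + i) + k) = T (S (y + j) + k') := congrArg T (hk.symm.trans hk')
  rw [h.isCircleLift.add_int, h.isCircleLift.add_int, h.rightInverse, h.rightInverse, add_assoc,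
    add_assoc, add_right_inj] at hT
  have hint : (i : ℤ) + d * k = j + d * k' := by exact_mod_cast hT
  have hdvd : d ∣ (i : ℤ) - j := ⟨k' - k, by linarith⟩
  have hzero : (i : ℤ) - j = 0 := by
    refine Int.eq_zero_of_abs_lt_dvd ((abs_dvd _ _).2 hdvd) ?_
    rw [Int.abs_eq_natAbs d, abs_lt]
    constructor <;> omega
  lia

theorem finite_iteratePreimages (h : IsCircleSystem lam L d T S G) (n : ℕ) (y : ℝ) :
    (iteratePreimages T n y).Finite := by
  induction n generalizing y with
  | zero => exact iteratePreimages_order_zero y ▸ finite_singleton _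
  | succ n ih => exact h.iteratePreimages_succ n y ▸ finite_iUnion fun i => ih _

theorem finsum_iteratePreimages (h : IsCircleSystem lam L d T S G) (n : ℕ) (y : ℝ) :
    ∑ᶠ x ∈ iteratePreimages T n y, Real.exp (birkhoff T G n x)
      = partitionFun (inverseBranch S d) (branchPotential S G d) n y := by
  induction n generalizing y with
  | zero =>
    rw [iteratePreimages_order_zero, finsum_mem_singleton, partitionFun_zero, birkhoff,
      Finset.sum_range_zero, Real.exp_zero]
  | succ n ih =>
    have hfin := fun i => h.finite_iteratePreimages n (inverseBranch S d i y)
    rw [h.iteratePreimages_succ, finsum_mem_iUnion (h.pairwise_disjoint_iteratePreimages n y) hfin,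
      finsum_eq_sum_of_fintype, partitionFun_succ]
    refine Finset.sum_congr rfl fun i _ => ?_
    rw [← ih, ← smul_eq_mul, smul_finsum_mem (hfin i)]
    refine finsum_mem_congr rfl fun x ⟨_, k, hk⟩ => ?_
    rw [birkhoff_succ, hk, periodic_add_int h.periodic, add_comm, Real.exp_add]
    rfl

end IsCircleSystem

theorem finite_and_finsum_mem_le_of_injOn {α β κ : Type*} {A : Set α} {B : Set β} {J : Finset κ}
    {f : α → ℝ} {g : β → ℝ} {M : ℝ} {Φ : α → β × κ} (hB : B.Finite)
    (hΦ : MapsTo Φ A (B ×ˢ (J : Set κ))) (hinj : InjOn Φ A) (hg : ∀ b, 0 ≤ g b) (hM : 0 ≤ M)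
    (hfg : ∀ a ∈ A, f a ≤ M * g (Φ a).1) :
    A.Finite ∧ ∑ᶠ a ∈ A, f a ≤ M * J.card * ∑ᶠ b ∈ B, g b := by
  have hA : A.Finite :=
    Finite.of_finite_image ((hB.prod J.finite_toSet).subset hΦ.image_subset) hinj
  refine ⟨hA, ?_⟩
  classical
  rw [finsum_mem_eq_finite_toFinset_sum _ hA, finsum_mem_eq_finite_toFinset_sum _ hB]
  calc ∑ a ∈ hA.toFinset, f a
      ≤ ∑ a ∈ hA.toFinset, M * g (Φ a).1 :=
        Finset.sum_le_sum fun a ha => hfg a (hA.mem_toFinset.1 ha)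
    _ = ∑ p ∈ hA.toFinset.image Φ, M * g p.1 :=
        (Finset.sum_image (f := fun p => M * g p.1) fun a ha b hb =>
          hinj (hA.mem_toFinset.1 ha) (hA.mem_toFinset.1 hb)).symm
    _ ≤ ∑ p ∈ hB.toFinset ×ˢ J, M * g p.1 := by
        refine Finset.sum_le_sum_of_subset_of_nonneg (Finset.image_subset_iff.2 fun a ha => ?_)
          fun p _ _ => mul_nonneg hM (hg _)
        have hΦa := hΦ (hA.mem_toFinset.1 ha)
        exact Finset.mem_product.2 ⟨hB.mem_toFinset.2 hΦa.1, hΦa.2⟩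
    _ = M * J.card * ∑ b ∈ hB.toFinset, g b := by
        rw [Finset.sum_product]
        simp only [Finset.sum_const, nsmul_eq_mul]
        rw [Finset.mul_sum]
        exact Finset.sum_congr rfl fun b _ => by ring

namespace IsCircleSystem

variable {lam L C : ℝ≥0} {d : ℤ} {T S G : ℝ → ℝ}

theorem lipschitzWith_birkhoff_iterate (h : IsCircleSystem lam L d T S G) (hC : L + C * lam ≤ C)
    (n : ℕ) : LipschitzWith C fun z => birkhoff T G n (S^[n] z) := by
  induction n with
  | zero => exact LipschitzWith.const' 0
  | succ n ih =>
    simp only [birkhoff_succ_iterate h.rightInverse]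
    refine ((ih.comp h.lipschitz_inv).add (h.lipschitz_potential.comp h.lipschitz_inv)).weaken ?_
    rw [add_comm]
    exact (add_le_add_left (mul_le_of_le_one_right' h.lt_one.le) _).trans hC

theorem contractingWith_iterate_inv (h : IsCircleSystem lam L d T S G) {n : ℕ} (hn : n ≠ 0) {c : ℝ}
    (hc : |c| ≤ 1) (k : ℝ) : ContractingWith lam fun p => S^[n] (c * p + k) := by
  refine ⟨h.lt_one, LipschitzWith.of_dist_le_mul fun p q => ?_⟩
  calc dist (S^[n] (c * p + k)) (S^[n] (c * q + k))
      ≤ (lam ^ n : ℝ≥0) * dist (c * p + k) (c * q + k) :=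
        (h.lipschitz_inv.iterate n).dist_le_mul _ _
    _ ≤ lam * dist p q := by
        rw [dist_add_right, Real.dist_eq, ← mul_sub, abs_mul, ← Real.dist_eq]
        gcongr
        · exact pow_le_of_le_one zero_le h.lt_one.le hn
        · exact mul_le_of_le_one_left dist_nonneg hc

theorem abs_sub_le_of_eq_iterate (h : IsCircleSystem lam L d T S G) {n : ℕ} (hn : n ≠ 0)
    {c c' k p q : ℝ} (hc : |c| ≤ 1) (hc' : |c'| ≤ 1) (hp : p = S^[n] (c * p + k))
    (hq : q = S^[n] (c' * q + k)) (hp1 : |p| ≤ 1) : |p - q| ≤ 2 * lam / (1 - lam) := by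
  have hcontr := h.contractingWith_iterate_inv hn hc' k
  refine (hcontr.dist_le_of_fixedPoint p hq.symm).trans
    (div_le_div_of_nonneg_right ?_ hcontr.one_sub_K_pos.le)
  calc dist p (S^[n] (c' * p + k)) = dist (S^[n] (c * p + k)) (S^[n] (c' * p + k)) := by rw [← hp]
    _ ≤ (lam ^ n : ℝ≥0) * dist (c * p + k) (c' * p + k) :=
        (h.lipschitz_inv.iterate n).dist_le_mul _ _
    _ ≤ lam * 2 := by
        rw [dist_add_right, Real.dist_eq, ← sub_mul, abs_mul]
        have hcc : |c - c'| ≤ 2 := (abs_sub c c').trans (by linarith)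
        gcongr
        · exact pow_le_of_le_one zero_le h.lt_one.le hn
        · exact (mul_le_of_le_one_right (abs_nonneg _) hp1).trans hcc
    _ = 2 * lam := mul_comm _ _

theorem eq_of_iterate_eq (h : IsCircleSystem lam L d T S G) {n : ℕ} (hn : n ≠ 0) {c k p q : ℝ}
    (hc : |c| ≤ 1) (hp : T^[n] p = c * p + k) (hq : T^[n] q = c * q + k) : p = q := by
  refine (h.contractingWith_iterate_inv hn hc k).fixedPoint_unique' ?_ ?_
  · rw [Function.IsFixedPt, ← hp, h.leftInverse.iterate n]
  · rw [Function.IsFixedPt, ← hq, h.leftInverse.iterate n]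

theorem exists_iterate_eq_and_abs_birkhoff_sub_le (h : IsCircleSystem lam L d T S G)
    (hC : L + C * lam ≤ C) {n : ℕ} (hn : n ≠ 0) {c c' k p : ℝ} (hc : |c| ≤ 1) (hc' : |c'| ≤ 1)
    (hp : T^[n] p = c * p + k) (hp1 : |p| ≤ 1) :
    ∃ q, T^[n] q = c' * q + k ∧ |p - q| ≤ 2 * lam / (1 - lam) ∧
      |birkhoff T G n p - birkhoff T G n q| ≤ C * (2 + 2 * lam / (1 - lam)) := by
  have hcontr := h.contractingWith_iterate_inv hn hc' k
  obtain ⟨q, hq⟩ : ∃ q, S^[n] (c' * q + k) = q := ⟨_, hcontr.fixedPoint_isFixedPt⟩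
  have hTq : T^[n] q = c' * q + k := by
    conv_lhs => rw [← hq]
    exact h.rightInverse.iterate n _
  have hSp : p = S^[n] (c * p + k) := by rw [← hp, h.leftInverse.iterate n]
  have hpq := h.abs_sub_le_of_eq_iterate hn hc hc' hSp hq.symm hp1
  refine ⟨q, hTq, hpq, ?_⟩
  have hdist := (h.lipschitzWith_birkhoff_iterate hC n).dist_le_mul (T^[n] p) (T^[n] q)
  simp only [h.leftInverse.iterate n _, Real.dist_eq] at hdist
  refine hdist.trans (mul_le_mul_of_nonneg_left ?_ C.2)
  have hq1 : |q| ≤ 1 + 2 * lam / (1 - lam) := by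
    have := abs_sub_abs_le_abs_sub q p
    rw [abs_sub_comm] at this
    linarith
  have hcp : |c * p| ≤ 1 := by rw [abs_mul]; exact mul_le_one₀ hc (abs_nonneg _) hp1
  have hcq : |c' * q| ≤ |q| := by rw [abs_mul]; exact mul_le_of_le_one_left (abs_nonneg _) hc'
  rw [hp, hTq, add_sub_add_right_eq_sub]
  linarith [abs_sub (c * p) (c' * q)]

theorem exists_finsum_coincidencePts_le (h : IsCircleSystem lam L d T S G) :
    ∃ M : ℝ, 0 < M ∧ ∀ {n : ℕ}, n ≠ 0 → ∀ {c c' : ℤ}, |(c : ℝ)| ≤ 1 → |(c' : ℝ)| ≤ 1 →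
      (coincidencePts T n c').Finite → (coincidencePts T n c).Finite ∧
        ∑ᶠ x ∈ coincidencePts T n c, Real.exp (birkhoff T G n x) ≤
          M * ∑ᶠ x ∈ coincidencePts T n c', Real.exp (birkhoff T G n x) := by
  obtain ⟨C, hC⟩ := exists_add_mul_le_self h.lt_one L
  set δ : ℝ := 2 * lam / (1 - lam) with hδ
  have hδ0 : 0 ≤ δ :=
    div_nonneg (mul_nonneg zero_le_two lam.2) (sub_nonneg.2 (NNReal.coe_le_one.2 h.lt_one.le))
  have hcard : 0 < (Finset.Icc ⌊-(1 + δ)⌋ ⌊1 + δ⌋).card :=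
    Finset.card_pos.2 (Finset.nonempty_Icc.2 (Int.floor_mono (by linarith)))
  refine ⟨Real.exp (C * (2 + δ)) * (Finset.Icc ⌊-(1 + δ)⌋ ⌊1 + δ⌋).card, by positivity, ?_⟩
  intro n hn c c' hc hc' hfin
  have hshadow : ∀ p ∈ coincidencePts T n c, ∃ (k : ℤ) (q : ℝ), T^[n] p = c * p + k ∧
      T^[n] q = c' * q + k ∧ |p - q| ≤ δ ∧
      |birkhoff T G n p - birkhoff T G n q| ≤ C * (2 + δ) ∧ |p| ≤ 1 := by
    rintro p ⟨⟨hp0, hp1⟩, k, hk⟩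
    have hp : |p| ≤ 1 := (abs_of_nonneg hp0).trans_le hp1.le
    obtain ⟨q, hq, hpq, hbirk⟩ := h.exists_iterate_eq_and_abs_birkhoff_sub_le hC hn hc hc' hk hp
    exact ⟨k, q, hk, hq, hpq, hbirk, hp⟩
  choose! k q hk hq hpq hbirk hp1 using hshadow
  refine finite_and_finsum_mem_le_of_injOn (Φ := fun p => (Int.fract (q p), ⌊q p⌋)) hfin ?_ ?_
    (fun _ => (Real.exp_pos _).le) (Real.exp_pos _).le ?_
  · refine fun p hp => ⟨fract_mem_coincidencePts h.isCircleLift (hq p hp), ?_⟩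
    have := abs_le.1 (hpq p hp)
    have := abs_le.1 (hp1 p hp)
    exact Finset.mem_coe.2 (Finset.mem_Icc.2
      ⟨Int.floor_mono (by linarith), Int.floor_mono (by linarith)⟩)
  · intro p hp p' hp' hΦ
    obtain ⟨hfract, hfloor⟩ := Prod.mk.inj hΦ
    have hqq : q p = q p' := by
      rw [← Int.fract_add_floor (q p), hfract, hfloor, Int.fract_add_floor]
    have hkk : (k p : ℝ) = k p' := by linarith [hq p hp, hq p' hp', hqq ▸ hq p hp]
    exact h.eq_of_iterate_eq hn hc (hk p hp) (hkk ▸ hk p' hp')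
  · intro p hp
    have hfract : birkhoff T G n (Int.fract (q p)) = birkhoff T G n (q p) := by
      conv_rhs => rw [← Int.fract_add_floor (q p), birkhoff_add_int h.isCircleLift h.periodic]
    rw [hfract, ← Real.exp_add, Real.exp_le_exp]
    linarith [(abs_le.1 (hbirk p hp)).2]

theorem exists_abs_log_finsum_periodicPtsIn_sub_le (h : IsCircleSystem lam L d T S G) :
    ∃ M : ℝ, ∀ n : ℕ, n ≠ 0 →
      |Real.log (∑ᶠ x ∈ periodicPtsIn T n, Real.exp (birkhoff T G n x)) -
        Real.log (partitionFun (inverseBranch S d) (branchPotential S G d) n 0)| ≤ M := by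
  have : NeZero d.natAbs := ⟨Int.natAbs_ne_zero.2 h.degree_ne_zero⟩
  obtain ⟨M, hM, hle⟩ := h.exists_finsum_coincidencePts_le
  refine ⟨Real.log M, fun n hn => ?_⟩
  set Q := partitionFun (inverseBranch S d) (branchPotential S G d) n 0
  have hQ0 : 0 < Q := partitionFun_pos _ _
  have h0 : |((0 : ℤ) : ℝ)| ≤ 1 := by norm_num
  have h1 : |((1 : ℤ) : ℝ)| ≤ 1 := by norm_num
  have hpre : (coincidencePts T n 0).Finite := coincidencePts_zero n ▸ h.finite_iteratePreimages n 0
  have hupper := hle hn h1 h0 hpre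
  have hlower := (hle hn h0 h1 hupper.1).2
  rw [coincidencePts_one, coincidencePts_zero, h.finsum_iteratePreimages] at hupper hlower
  set Z := ∑ᶠ x ∈ periodicPtsIn T n, Real.exp (birkhoff T G n x)
  have hZ0 : 0 < Z := pos_of_mul_pos_right (hQ0.trans_le hlower) hM.le
  have hlogZ := Real.log_le_log hZ0 hupper.2
  have hlogQ := Real.log_le_log hQ0 hlower
  rw [Real.log_mul hM.ne' hQ0.ne'] at hlogZ
  rw [Real.log_mul hM.ne' hZ0.ne'] at hlogQ
  exact abs_sub_le_iff.2 ⟨by linarith, by linarith⟩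

theorem pressureExp_eq (h : IsCircleSystem lam L d T S G) {a : ℝ}
    (ha : Tendsto (fun n : ℕ =>
      Real.log (partitionFun (inverseBranch S d) (branchPotential S G d) n 0) / n) atTop (𝓝 a)) :
    pressureExp T G = a := by
  obtain ⟨M, hM⟩ := h.exists_abs_log_finsum_periodicPtsIn_sub_le
  refine Tendsto.limsup_eq (ha.congr_dist ?_)
  refine squeeze_zero' (Eventually.of_forall fun _ => dist_nonneg) ?_
    (tendsto_const_div_atTop_nhds_zero_nat M)
  filter_upwards [eventually_ne_atTop 0] with n hn
  rw [dist_comm, Real.dist_eq, ← sub_div, abs_div, Nat.abs_cast]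
  exact div_le_div_of_nonneg_right (hM n hn) n.cast_nonneg

end IsCircleSystem

section JointSmoothness

variable {E : Type*} [NormedAddCommGroup E] [NormedSpace ℝ E]

theorem contDiffOn_succ_of_partial [FiniteDimensional ℝ E] {K : ℕ} {s : Set (E × ℝ)}
    (hs : IsOpen s) {f f₂ : E × ℝ → ℝ} {f₁ : E × ℝ → E →L[ℝ] ℝ}
    (hf₁ : ∀ p ∈ s, HasFDerivAt (fun t => f (t, p.2)) (f₁ p) p.1)
    (hf₂ : ∀ p ∈ s, HasDerivAt (fun x => f (p.1, x)) (f₂ p) p.2)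
    (hc₁ : ∀ e, ContDiffOn ℝ K (fun p => f₁ p e) s) (hc₂ : ContDiffOn ℝ K f₂ s) :
    ContDiffOn ℝ (K + 1 : ℕ) f s := by
  have hc₁' : ContDiffOn ℝ K f₁ s := contDiffOn_clm_apply.2 hc₁
  have hc₂' : ContDiffOn ℝ K (fun p => ContinuousLinearMap.toSpanSingleton ℝ (f₂ p)) s :=
    (ContinuousLinearMap.toSpanSingletonCLE (𝕜 := ℝ) (E := ℝ)).contDiff.comp_contDiffOn hc₂
  push_cast
  rw [contDiffOn_succ_iff_hasFDerivWithinAt_of_uniqueDiffOn hs.uniqueDiffOn]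
  refine ⟨fun h => absurd h (by simp),
    fun p => (f₁ p).coprod (ContinuousLinearMap.toSpanSingleton ℝ (f₂ p)), ?_, fun p hp => ?_⟩
  · rw [contDiffOn_clm_apply]
    exact fun v => (hc₁ v.1).add ((contDiffOn_const (c := v.2)).mul hc₂)
  · have hnhds := hs.mem_nhds hp
    have hstrict := hasStrictFDerivAt_uncurry_coprod (𝕜 := ℝ) (u := p)
      (f := fun t x => f (t, x)) (f₁ := fun t x => f₁ (t, x))
      (f₂ := fun t x => ContinuousLinearMap.toSpanSingleton ℝ (f₂ (t, x)))
      (eventually_of_mem hnhds fun q hq => hf₁ q hq)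
      (eventually_of_mem hnhds fun q hq => (hf₂ q hq).hasFDerivAt)
      (hc₁'.continuousOn.continuousAt hnhds) (hc₂'.continuousOn.continuousAt hnhds)
    exact hstrict.hasFDerivAt.hasFDerivWithinAt

/-- The integral from `0` to `x` of a bounded continuous function, as a continuous linear form. -/
def integralCLM (x : ℝ) : BoundedContinuousFunction ℝ ℝ →L[ℝ] ℝ :=
  LinearMap.mkContinuous
    { toFun := fun f => ∫ s in (0 : ℝ)..x, f s
      map_add' := fun f g => intervalIntegral.integral_add (f.continuous.intervalIntegrable _ _)
        (g.continuous.intervalIntegrable _ _)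
      map_smul' := fun c f => intervalIntegral.integral_const_mul c f } |x| fun f => by
    have := intervalIntegral.norm_integral_le_of_norm_le_const (a := 0) (b := x) (f := f)
      (C := ‖f‖) fun s _ => f.norm_coe_le_norm s
    rwa [sub_zero, mul_comm] at this

theorem integralCLM_apply (x : ℝ) (f : BoundedContinuousFunction ℝ ℝ) :
    integralCLM x f = ∫ s in (0 : ℝ)..x, f s :=
  rfl

theorem hasDerivAt_integralCLM (f : BoundedContinuousFunction ℝ ℝ) (x : ℝ) :
    HasDerivAt (fun x => integralCLM x f) (f x) x :=
  intervalIntegral.integral_hasDerivAt_right (f.continuous.intervalIntegrable _ _)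
    (f.continuous.stronglyMeasurableAtFilter _ _) f.continuous.continuousAt

theorem lipschitzWith_integralCLM : LipschitzWith 1 integralCLM := by
  refine LipschitzWith.of_dist_le_mul fun x y => ?_
  rw [NNReal.coe_one, one_mul, dist_eq_norm, Real.dist_eq]
  refine ContinuousLinearMap.opNorm_le_bound _ (abs_nonneg _) fun f => ?_
  have hsub : (integralCLM x - integralCLM y) f = ∫ s in y..x, f s :=
    intervalIntegral.integral_interval_sub_left (f.continuous.intervalIntegrable _ _)
      (f.continuous.intervalIntegrable _ _)
  rw [hsub, mul_comm]
  exact intervalIntegral.norm_integral_le_of_norm_le_const fun s _ => f.norm_coe_le_norm s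

/-- `f` is a primitive of `g`. This is stated with an integral rather than with a derivative, so
that the condition is visibly closed and linear in `(f, g)`. -/
def IsPrimitive (f g : BoundedContinuousFunction ℝ ℝ) : Prop :=
  ∀ x, f x = f 0 + integralCLM x g

theorem IsPrimitive.hasDerivAt {f g : BoundedContinuousFunction ℝ ℝ} (h : IsPrimitive f g) (x : ℝ) :
    HasDerivAt f (g x) x := by
  rw [show ⇑f = fun x => f 0 + integralCLM x g from funext h]
  exact (hasDerivAt_integralCLM g x).const_add _

theorem isPrimitive_fderiv_apply {U : Set E} (hU : IsOpen U)
    {f g : E → BoundedContinuousFunction ℝ ℝ} {t : E} (ht : t ∈ U)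
    (hf : DifferentiableAt ℝ f t) (hg : DifferentiableAt ℝ g t)
    (h : ∀ s ∈ U, IsPrimitive (f s) (g s)) (e : E) :
    IsPrimitive (fderiv ℝ f t e) (fderiv ℝ g t e) := by
  intro x
  have hev := fun x : ℝ => (BoundedContinuousFunction.evalCLM ℝ x).hasFDerivAt.comp t hf.hasFDerivAt
  have hint := (integralCLM x).hasFDerivAt.comp t hg.hasFDerivAt
  have heq := (hev x).unique (((hev 0).add hint).congr_of_eventuallyEq
    (eventually_of_mem (hU.mem_nhds ht) fun s hs => h s hs x))
  exact DFunLike.congr_fun heq e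

variable [FiniteDimensional ℝ E] {U : Set E}

theorem contDiffOn_uncurry_of_isPrimitive (hU : IsOpen U) (K : ℕ)
    (Φ : ℕ → E → BoundedContinuousFunction ℝ ℝ) (hΦ : ∀ j ≤ K, ContDiffOn ℝ K (Φ j) U)
    (hprim : ∀ j < K, ∀ t ∈ U, IsPrimitive (Φ j t) (Φ (j + 1) t)) :
    ContDiffOn ℝ K (fun p : E × ℝ => Φ 0 p.1 p.2) (U ×ˢ univ) := by
  induction K generalizing Φ with
  | zero =>
    refine contDiffOn_zero.2 ?_
    exact continuous_eval.comp_continuousOn (((hΦ 0 le_rfl).continuousOn.comp continuousOn_fst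
      fun p hp => hp.1).prodMk continuousOn_snd)
  | succ K ih =>
    have hdiff : ∀ j ≤ K + 1, ∀ t ∈ U, DifferentiableAt ℝ (Φ j) t := fun j hj t ht =>
      ((hΦ j hj).differentiableOn (by simp)).differentiableAt (hU.mem_nhds ht)
    have hev (x : ℝ) (t : E) (ht : t ∈ U) : HasFDerivAt (fun t => Φ 0 t x)
        ((BoundedContinuousFunction.evalCLM ℝ x).comp (fderiv ℝ (Φ 0) t)) t :=
      HasFDerivAt.comp (g := BoundedContinuousFunction.evalCLM ℝ x) t
        (BoundedContinuousFunction.evalCLM (α := ℝ) (β := ℝ) ℝ x).hasFDerivAt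
        (hdiff 0 (Nat.zero_le _) t ht).hasFDerivAt
    refine contDiffOn_succ_of_partial (hU.prod isOpen_univ) (fun p hp => hev p.2 p.1 hp.1)
      (fun p hp => (hprim 0 K.succ_pos p.1 hp.1).hasDerivAt p.2) (fun e => ?_) ?_
    · exact ih (fun j t => fderiv ℝ (Φ j) t e)
        (fun j hj => ((hΦ j (by lia)).fderiv_of_isOpen hU (by simp)).clm_apply contDiffOn_const)
        fun j hj t ht => isPrimitive_fderiv_apply hU ht (hdiff j (by lia) t ht)
          (hdiff (j + 1) (by lia) t ht) (hprim j (by lia)) e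
    · exact ih (fun j => Φ (j + 1)) (fun j hj => (hΦ (j + 1) (by lia)).of_le (by simp))
        fun j hj => hprim (j + 1) (by lia)

theorem contDiffOn_uncurry_add_integralCLM (hU : IsOpen U) (K : ℕ) (c : E → ℝ)
    (Φ : ℕ → E → BoundedContinuousFunction ℝ ℝ) (hc : ContDiffOn ℝ K c U)
    (hΦ : ∀ j ≤ K - 1, ContDiffOn ℝ K (Φ j) U)
    (hprim : ∀ j < K - 1, ∀ t ∈ U, IsPrimitive (Φ j t) (Φ (j + 1) t)) :
    ContDiffOn ℝ K (fun p : E × ℝ => c p.1 + integralCLM p.2 (Φ 0 p.1)) (U ×ˢ univ) := by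
  have hfst : MapsTo (Prod.fst : E × ℝ → E) (U ×ˢ univ) U := fun p hp => hp.1
  induction K generalizing c Φ with
  | zero =>
    refine contDiffOn_zero.2 ((hc.continuousOn.comp continuousOn_fst hfst).add ?_)
    exact (lipschitzWith_integralCLM.continuous.comp_continuousOn continuousOn_snd).clm_apply
      ((hΦ 0 le_rfl).continuousOn.comp continuousOn_fst hfst)
  | succ K ih =>
    have hdiff : ∀ j ≤ K, ∀ t ∈ U, DifferentiableAt ℝ (Φ j) t := fun j hj t ht =>
      ((hΦ j hj).differentiableOn (by simp)).differentiableAt (hU.mem_nhds ht)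
    have hcdiff : ∀ t ∈ U, DifferentiableAt ℝ c t := fun t ht =>
      (hc.differentiableOn (by simp)).differentiableAt (hU.mem_nhds ht)
    refine contDiffOn_succ_of_partial (hU.prod isOpen_univ)
      (f₁ := fun p => fderiv ℝ c p.1 + (integralCLM p.2).comp (fderiv ℝ (Φ 0) p.1))
      (f₂ := fun p => Φ 0 p.1 p.2)
      (fun p hp => (hcdiff p.1 hp.1).hasFDerivAt.add ((integralCLM p.2).hasFDerivAt.comp p.1
        (hdiff 0 (Nat.zero_le _) p.1 hp.1).hasFDerivAt))
      (fun p _ => (hasDerivAt_integralCLM (Φ 0 p.1) p.2).const_add (c p.1)) (fun e => ?_) ?_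
    · exact ih (fun t => fderiv ℝ c t e) (fun j t => fderiv ℝ (Φ j) t e)
        ((hc.fderiv_of_isOpen hU (by simp)).clm_apply contDiffOn_const)
        (fun j hj => ((hΦ j (by lia)).fderiv_of_isOpen hU (by simp)).clm_apply contDiffOn_const)
        fun j hj t ht => isPrimitive_fderiv_apply hU ht (hdiff j (by lia) t ht)
          (hdiff (j + 1) (by lia) t ht) (hprim j (by lia)) e
    · exact contDiffOn_uncurry_of_isPrimitive hU K Φ
        (fun j hj => (hΦ j hj).of_le (by simp)) fun j hj => hprim j hj

end JointSmoothness

section Families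

theorem toBCF_apply {u : ℝ → ℝ} (hc : Continuous u) (hp : Function.Periodic u 1) (x : ℝ) :
    toBCF u x = u x := by
  have hbdd : ∃ C, ∀ x y, dist (u x) (u y) ≤ C :=
    let ⟨C, hC⟩ := Metric.isBounded_iff.1 (hp.compact_of_continuous one_ne_zero hc).isBounded
    ⟨C, fun x y => hC (mem_range_self x) (mem_range_self y)⟩
  rw [toBCF, dif_pos ⟨hc, hbdd⟩]
  rfl

theorem periodic_iteratedDeriv {u : ℝ → ℝ} (hp : Function.Periodic u 1) (j : ℕ) :
    Function.Periodic (iteratedDeriv j u) 1 := fun x => by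
  rw [← congrFun (iteratedDeriv_comp_add_const j u 1) x, funext hp]

theorem iteratedDeriv_eq_add_integralCLM {u : ℝ → ℝ} {j : ℕ} (hu : ContDiff ℝ (j + 1 : ℕ) u)
    (hp : Function.Periodic (iteratedDeriv (j + 1) u) 1) (x : ℝ) :
    iteratedDeriv j u x =
      iteratedDeriv j u 0 + integralCLM x (toBCF (iteratedDeriv (j + 1) u)) := by
  have hcont : Continuous (iteratedDeriv (j + 1) u) := hu.continuous_iteratedDeriv' (j + 1)
  have hderiv : ∀ y, HasDerivAt (iteratedDeriv j u) (iteratedDeriv (j + 1) u y) y := fun y => by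
    rw [iteratedDeriv_succ]
    exact (hu.differentiable_iteratedDeriv j (by exact_mod_cast j.lt_succ_self) y).hasDerivAt
  rw [integralCLM_apply]
  simp only [toBCF_apply hcont hp]
  rw [intervalIntegral.integral_eq_sub_of_hasDerivAt (fun y _ => hderiv y)
    (hcont.intervalIntegrable _ _), add_sub_cancel]

theorem isPrimitive_toBCF_iteratedDeriv {u : ℝ → ℝ} {j : ℕ} (hu : ContDiff ℝ (j + 1 : ℕ) u)
    (hp : Function.Periodic (iteratedDeriv j u) 1) :
    IsPrimitive (toBCF (iteratedDeriv j u)) (toBCF (iteratedDeriv (j + 1) u)) := by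
  have hcont : Continuous (iteratedDeriv j u) :=
    hu.continuous_iteratedDeriv j (by exact_mod_cast j.le_succ)
  have hp' : Function.Periodic (iteratedDeriv (j + 1) u) 1 := by
    rw [iteratedDeriv_succ, ← iteratedDeriv_one]
    exact periodic_iteratedDeriv hp 1
  intro x
  rw [toBCF_apply hcont hp, toBCF_apply hcont hp, iteratedDeriv_eq_add_integralCLM hu hp']

variable {E : Type*} [NormedAddCommGroup E] [NormedSpace ℝ E] [FiniteDimensional ℝ E] {U : Set E}
  {N r : ℕ}

theorem CNFamily.contDiffOn_uncurry {f : E → ℝ → ℝ} (hf : CNFamily N r U f) (hU : IsOpen U)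
    (hp : ∀ t ∈ U, Function.Periodic (f t) 1) :
    ContDiffOn ℝ (min N r : ℕ) (fun p : E × ℝ => f p.1 p.2) (U ×ˢ univ) := by
  refine (contDiffOn_uncurry_of_isPrimitive hU (min N r)
    (fun j t => toBCF (iteratedDeriv j (f t))) (fun j hj => ?_) fun j hj t ht => ?_).congr
      fun p hp' => ?_
  · exact (hf.2 j (hj.trans (min_le_right _ _))).of_le (by exact_mod_cast min_le_left N r)
  · exact isPrimitive_toBCF_iteratedDeriv ((hf.1 t ht).of_le (by exact_mod_cast by lia))
      (periodic_iteratedDeriv (hp t ht) j)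
  · rw [iteratedDeriv_zero, toBCF_apply (hf.1 p.1 hp'.1).continuous (hp p.1 hp'.1)]

theorem CNFamilyU.contDiffOn_uncurry {F : E → ℝ → ℝ} (hF : CNFamilyU N r U F) (hU : IsOpen U)
    (hr : 1 ≤ r) (hp : ∀ t ∈ U, Function.Periodic (deriv (F t)) 1) :
    ContDiffOn ℝ (min N r : ℕ) (fun p : E × ℝ => F p.1 p.2) (U ×ˢ univ) := by
  have hp' : ∀ t ∈ U, ∀ j, Function.Periodic (iteratedDeriv (j + 1) (F t)) 1 := fun t ht j => by
    rw [iteratedDeriv_succ']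
    exact periodic_iteratedDeriv (hp t ht) j
  refine (contDiffOn_uncurry_add_integralCLM hU (min N r) (fun t => F t 0)
    (fun j t => toBCF (iteratedDeriv (j + 1) (F t))) ?_ (fun j hj => ?_) fun j hj t ht => ?_).congr
      fun p hp'' => ?_
  · exact hF.2.1.of_le (by exact_mod_cast min_le_left N r)
  · exact (hF.2.2 (j + 1) j.succ_pos (by lia)).of_le (by exact_mod_cast min_le_left N r)
  · exact isPrimitive_toBCF_iteratedDeriv ((hF.1 t ht).of_le (by exact_mod_cast by lia))
      (hp' t ht j)
  · exact iteratedDeriv_eq_add_integralCLM (j := 0)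
      ((hF.1 p.1 hp''.1).of_le (by exact_mod_cast hr)) (hp' p.1 hp''.1 0) p.2

end Families

/-! ### The inverse of the lift of an expanding map -/

section Inverse

theorem antilipschitzWith_of_one_le_mul_abs_deriv {f : ℝ → ℝ} {K : ℝ≥0} (hf : Differentiable ℝ f)
    (hK : ∀ x, 1 ≤ K * |deriv f x|) : AntilipschitzWith K f := by
  have hlt : ∀ x y, x < y → dist x y ≤ K * dist (f x) (f y) := by
    intro x y hxy
    obtain ⟨z, -, hz⟩ := exists_deriv_eq_slope f hxy hf.continuous.continuousOn hf.differentiableOn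
    rw [dist_comm x, dist_comm (f x), Real.dist_eq, Real.dist_eq]
    calc |y - x| ≤ K * |deriv f z| * |y - x| := le_mul_of_one_le_left (abs_nonneg _) (hK z)
      _ = K * |f y - f x| := by
        rw [mul_assoc, ← abs_mul, hz, div_mul_cancel₀ _ (sub_pos.2 hxy).ne']
  refine AntilipschitzWith.of_le_mul_dist fun x y => ?_
  rcases lt_trichotomy x y with hxy | rfl | hyx
  · exact hlt x y hxy
  · simp
  · rw [dist_comm x, dist_comm (f x)]
    exact hlt y x hyx

variable {T : ℝ → ℝ} {d : ℤ}

theorem IsCircleLift.periodic_deriv (hT : IsCircleLift T d) : Function.Periodic (deriv T) 1 :=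
  fun x => by
    rw [← deriv_comp_add_const, show (fun x => T (x + 1)) = fun x => T x + d from funext hT,
      deriv_add_const]

theorem IsCircleLift.apply_one_sub_apply_zero (hT : IsCircleLift T d) : T 1 - T 0 = d := by
  rw [← zero_add (1 : ℝ), hT, add_sub_cancel_left]

theorem IsCircleLift.surjective (hT : IsCircleLift T d) (hc : Continuous T) (hd : d ≠ 0) :
    Function.Surjective T := by
  intro y
  obtain ⟨k, hk⟩ := exists_nat_ge |y - T 0|
  have hd1 : (1 : ℝ) ≤ (d : ℝ) * d := by exact_mod_cast Order.one_le_iff_pos.2 (mul_self_pos.2 hd)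
  have hk0 : (k : ℝ) ≤ d * d * k := le_mul_of_one_le_left k.cast_nonneg hd1
  have hT0 : ∀ j : ℤ, T j = T 0 + d * j := fun j => by rw [← hT.add_int, zero_add]
  refine mem_range_of_exists_le_of_exists_ge hc ⟨((-(d * k) : ℤ) : ℝ), ?_⟩ ⟨((d * k : ℤ) : ℝ), ?_⟩
  · rw [hT0]
    push_cast
    linarith [neg_abs_le (y - T 0)]
  · rw [hT0]
    push_cast
    linarith [le_abs_self (y - T 0)]

theorem IsExpandingLift.antilipschitzWith {lam : ℝ≥0} (hlam : 0 < lam) {r : ℕ} (hr : 1 ≤ r)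
    (hT : IsExpandingLift lam r T) : AntilipschitzWith lam T := by
  refine antilipschitzWith_of_one_le_mul_abs_deriv
    (hT.1.differentiable (by exact_mod_cast Nat.one_le_iff_ne_zero.1 hr)) fun x => ?_
  calc (1 : ℝ) = lam * (lam : ℝ)⁻¹ := (mul_inv_cancel₀ (NNReal.coe_ne_zero.2 hlam.ne')).symm
    _ ≤ lam * |deriv T x| := mul_le_mul_of_nonneg_left (hT.2.2 x) lam.2

theorem IsExpandingLift.surjective {lam : ℝ≥0} (hlam : 0 < lam) {r : ℕ} (hr : 1 ≤ r)
    (hT : IsExpandingLift lam r T) : Function.Surjective T := by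
  obtain ⟨d, hd⟩ := hT.2.1
  exact hd.surjective hT.1.continuous
    (hd.degree_ne_zero (hT.antilipschitzWith hlam hr).injective)

variable {X F : Type*}

theorem continuousOn_inverse_of_antilipschitzWith [TopologicalSpace X] [PseudoMetricSpace F]
    {U : Set X} (hU : IsOpen U) {K : ℝ≥0} {f g : X × F → F}
    (hf : ContinuousOn f (U ×ˢ univ)) (hK : ∀ t ∈ U, AntilipschitzWith K fun x => f (t, x))
    (hfg : ∀ t ∈ U, ∀ y, f (t, g (t, y)) = y) : ContinuousOn g (U ×ˢ univ) := by
  rintro ⟨t, y⟩ ⟨ht, -⟩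
  refine ContinuousAt.continuousWithinAt (tendsto_iff_dist_tendsto_zero.2 ?_)
  have hmem : ∀ᶠ p : X × F in 𝓝 (t, y), p.1 ∈ U :=
    continuousAt_fst.eventually_mem (hU.mem_nhds ht)
  have hfix : Tendsto (fun p : X × F => f (p.1, g (t, y))) (𝓝 (t, y)) (𝓝 y) := by
    have hcomp := ContinuousAt.comp (f := fun p : X × F => (p.1, g (t, y))) (x := (t, y))
      (hf.continuousAt ((hU.prod isOpen_univ).mem_nhds ⟨ht, mem_univ _⟩))
      (continuousAt_fst.prodMk continuousAt_const)
    rw [ContinuousAt, Function.comp_apply, hfg t ht] at hcomp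
    exact hcomp
  have hlim : Tendsto (fun p : X × F => K * dist p.2 (f (p.1, g (t, y)))) (𝓝 (t, y)) (𝓝 0) := by
    simpa using ((continuousAt_snd (p := (t, y))).dist hfix).const_mul (K : ℝ)
  refine squeeze_zero' (Eventually.of_forall fun _ => dist_nonneg) ?_ hlim
  filter_upwards [hmem] with p hp
  have hle := (hK p.1 hp).le_mul_dist (g p) (g (t, y))
  rwa [hfg p.1 hp p.2] at hle

/-- The fibrewise homeomorphism of `U × F` given by `f`, with fibrewise inverse `g`. -/
def fiberwiseHomeomorph [TopologicalSpace X] [TopologicalSpace F] {U : Set X} (hU : IsOpen U)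
    {f g : X × F → F} (hf : ContinuousOn f (U ×ˢ univ)) (hg : ContinuousOn g (U ×ˢ univ))
    (hgf : ∀ t ∈ U, ∀ x, g (t, f (t, x)) = x) (hfg : ∀ t ∈ U, ∀ y, f (t, g (t, y)) = y) :
    OpenPartialHomeomorph (X × F) (X × F) where
  toFun := skewProduct f
  invFun := skewProduct g
  source := U ×ˢ univ
  target := U ×ˢ univ
  map_source' _ hp := ⟨hp.1, mem_univ _⟩
  map_target' _ hp := ⟨hp.1, mem_univ _⟩
  left_inv' p hp := Prod.ext rfl (hgf p.1 hp.1 p.2)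
  right_inv' p hp := Prod.ext rfl (hfg p.1 hp.1 p.2)
  open_source := hU.prod isOpen_univ
  open_target := hU.prod isOpen_univ
  continuousOn_toFun := continuousOn_fst.prodMk hf
  continuousOn_invFun := continuousOn_fst.prodMk hg

theorem exists_hasFDerivAt_skewProduct_equiv {E F : Type*} [NormedAddCommGroup E]
    [NormedSpace ℝ E] [NormedAddCommGroup F] [NormedSpace ℝ F] {f : E × F → F} {p : E × F}
    (hf : DifferentiableAt ℝ f p) {B : F ≃L[ℝ] F}
    (hB : HasFDerivAt (fun x => f (p.1, x)) (B : F →L[ℝ] F) p.2) :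
    ∃ A : (E × F) ≃L[ℝ] E × F, HasFDerivAt (skewProduct f) (A : E × F →L[ℝ] E × F) p := by
  have hinr : (fderiv ℝ f p).comp (ContinuousLinearMap.inr ℝ E F) = B :=
    (HasFDerivAt.comp p.2 hf.hasFDerivAt (hasFDerivAt_prodMk_right p.1 p.2)).unique hB
  let A := (ContinuousLinearEquiv.refl ℝ E).skewProd B
    ((fderiv ℝ f p).comp (ContinuousLinearMap.inl ℝ E F))
  have hA : (A : E × F →L[ℝ] E × F) = (ContinuousLinearMap.fst ℝ E F).prod (fderiv ℝ f p) := by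
    refine ContinuousLinearMap.ext fun v => Prod.ext rfl ?_
    change B v.2 + fderiv ℝ f p (v.1, 0) = fderiv ℝ f p v
    rw [← ContinuousLinearEquiv.coe_coe, ← hinr]
    change fderiv ℝ f p (0, v.2) + fderiv ℝ f p (v.1, 0) = fderiv ℝ f p v
    rw [← map_add, Prod.mk_add_mk, zero_add, add_zero]
  exact ⟨A, hA ▸ hasFDerivAt_fst.prodMk hf.hasFDerivAt⟩

theorem contDiffOn_inverse_of_antilipschitzWith {E F : Type*} [NormedAddCommGroup E]
    [NormedSpace ℝ E] [CompleteSpace E] [NormedAddCommGroup F] [NormedSpace ℝ F] [CompleteSpace F]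
    {U : Set E} (hU : IsOpen U) {n : ℕ} {K : ℝ≥0} {f g : E × F → F}
    (hf : ContDiffOn ℝ n f (U ×ˢ univ)) (hK : ∀ t ∈ U, AntilipschitzWith K fun x => f (t, x))
    (hfg : ∀ t ∈ U, ∀ y, f (t, g (t, y)) = y)
    (hderiv : ∀ t ∈ U, ∀ x, ∃ B : F ≃L[ℝ] F,
      HasFDerivAt (fun x => f (t, x)) (B : F →L[ℝ] F) x) :
    ContDiffOn ℝ n g (U ×ˢ univ) := by
  have hg := continuousOn_inverse_of_antilipschitzWith hU hf.continuousOn hK hfg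
  rcases eq_or_ne n 0 with rfl | hn
  · exact contDiffOn_zero.2 hg
  have hgf : ∀ t ∈ U, ∀ x, g (t, f (t, x)) = x := fun t ht x =>
    (hK t ht).injective (hfg t ht (f (t, x)))
  rintro ⟨t, y⟩ ⟨ht, hy⟩
  obtain ⟨B, hB⟩ := hderiv t ht (g (t, y))
  have hf' : ContDiffAt ℝ n f (t, g (t, y)) :=
    hf.contDiffAt ((hU.prod isOpen_univ).mem_nhds ⟨ht, mem_univ _⟩)
  obtain ⟨A, hA⟩ := exists_hasFDerivAt_skewProduct_equiv (p := (t, g (t, y)))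
    (hf'.differentiableAt (by exact_mod_cast hn)) hB
  let Ψ := fiberwiseHomeomorph hU hf.continuousOn hg hgf hfg
  have hsymm : ContDiffAt ℝ n Ψ.symm (t, y) :=
    Ψ.contDiffAt_symm ⟨ht, hy⟩ hA (contDiffAt_fst.prodMk hf')
  exact (contDiffAt_snd.comp (t, y) hsymm).contDiffWithinAt

end Inverse

/-! ### Localisation in the parameter -/

section Localisation

open Metric

theorem exists_norm_iteratedFDeriv_le_of_eq_comp_snd {E F G : Type*} [NormedAddCommGroup E]
    [NormedSpace ℝ E] [NormedAddCommGroup F] [NormedSpace ℝ F] [NormedAddCommGroup G]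
    [NormedSpace ℝ G] {K : ℕ} {f : E × F → G} {h : F → G} {s : Set E} {k : Set F}
    (hf : ContDiff ℝ K f) (hh : ContDiff ℝ K h) (hs : IsCompact s) (hk : IsCompact k)
    (hfh : ∀ t ∉ s, ∀ y, f (t, y) = h y) :
    ∃ C : ℝ≥0, ∀ l ≤ K, ∀ t, ∀ y ∈ k, ‖iteratedFDeriv ℝ l f (t, y)‖ ≤ C := by
  have hbound : ∀ l, ∃ c, l ≤ K → ∀ t, ∀ y ∈ k, ‖iteratedFDeriv ℝ l f (t, y)‖ ≤ c := by
    intro l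
    by_cases hl : l ≤ K
    swap
    · exact ⟨0, fun hl' => absurd hl' hl⟩
    have hl' : (l : WithTop ℕ∞) ≤ K := by exact_mod_cast hl
    obtain ⟨c₁, hc₁⟩ := (hs.prod hk).exists_bound_of_continuousOn
      (hf.continuous_iteratedFDeriv hl').continuousOn
    obtain ⟨c₂, hc₂⟩ := hk.exists_bound_of_continuousOn
      (hh.continuous_iteratedFDeriv hl').continuousOn
    refine ⟨max c₁ c₂, fun _ t y hy => ?_⟩
    by_cases ht : t ∈ s
    · exact (hc₁ (t, y) ⟨ht, hy⟩).trans (le_max_left _ _)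
    have heq : f =ᶠ[𝓝 (t, y)] h ∘ ContinuousLinearMap.snd ℝ E F := by
      filter_upwards [(continuousAt_fst (p := (t, y))).eventually_mem
        (hs.isClosed.isOpen_compl.mem_nhds ht)] with p hp
      exact hfh p.1 hp p.2
    rw [(heq.iteratedFDeriv ℝ l).eq_of_nhds,
      ContinuousLinearMap.iteratedFDeriv_comp_right _ hh _ hl']
    calc _ ≤ ‖iteratedFDeriv ℝ l h y‖ * ∏ _i : Fin l, ‖ContinuousLinearMap.snd ℝ E F‖ :=
          ContinuousMultilinearMap.norm_compContinuousLinearMap_le _ _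
      _ ≤ ‖iteratedFDeriv ℝ l h y‖ := mul_le_of_le_one_right (norm_nonneg _)
          (Finset.prod_le_one (fun _ _ => norm_nonneg _) fun _ _ =>
            ContinuousLinearMap.norm_snd_le ℝ E F)
      _ ≤ max c₁ c₂ := (hc₂ y hy).trans (le_max_right _ _)
  choose c hc using hbound
  refine ⟨(Finset.range (K + 1)).sup fun l => (c l).toNNReal, fun l hl t y hy => ?_⟩
  have hle : (c l).toNNReal ≤ (Finset.range (K + 1)).sup fun l => (c l).toNNReal :=
    Finset.le_sup (f := fun l => (c l).toNNReal) (Finset.mem_range.2 (by lia))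
  exact (hc l hl t y hy).trans ((Real.le_coe_toNNReal _).trans (by exact_mod_cast hle))

theorem exists_contDiff_eventuallyEq_id {E : Type*} [NormedAddCommGroup E] [NormedSpace ℝ E]
    [HasContDiffBump E] (n : ℕ∞) (t₀ : E) {R : ℝ} (hR : 0 < R) :
    ∃ Θ : E → E, ContDiff ℝ n Θ ∧ (∀ t, Θ t ∈ closedBall t₀ R) ∧ (∀ᶠ t in 𝓝 t₀, Θ t = t) ∧
      ∀ t ∉ closedBall t₀ R, Θ t = t₀ := by
  let χ : ContDiffBump t₀ := ⟨R / 2, R, half_pos hR, half_lt_self hR⟩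
  have hout : ∀ t ∉ closedBall t₀ R, t₀ + χ t • (t - t₀) = t₀ := fun t ht => by
    rw [χ.zero_of_le_dist (not_le.1 ht).le, zero_smul, add_zero]
  refine ⟨fun t => t₀ + χ t • (t - t₀),
    contDiff_const.add (χ.contDiff.smul (contDiff_id.sub contDiff_const)), fun t => ?_, ?_, hout⟩
  · by_cases ht : t ∈ closedBall t₀ R
    · rw [mem_closedBall, dist_eq_norm, add_sub_cancel_left, norm_smul,
        Real.norm_of_nonneg χ.nonneg, ← dist_eq_norm]
      exact (mul_le_of_le_one_left dist_nonneg χ.le_one).trans ht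
    · exact mem_of_eq_of_mem (hout t ht) (mem_closedBall_self hR.le)
  · filter_upwards [χ.eventuallyEq_one] with t ht
    rw [ht, Pi.one_apply, one_smul, add_sub_cancel]

namespace IsCircleSystem

variable {lam L : ℝ≥0} {d : ℤ}

theorem lipschitzWith_inverseBranch {T S G : ℝ → ℝ} (h : IsCircleSystem lam L d T S G)
    (i : Fin d.natAbs) : LipschitzWith lam (inverseBranch S d i) := by
  have hcomp := h.lipschitz_inv.comp (isometry_add_right (i : ℝ)).lipschitz
  rwa [mul_one] at hcomp

theorem lipschitzWith_branchPotential {T S G : ℝ → ℝ} (h : IsCircleSystem lam L d T S G)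
    (i : Fin d.natAbs) : LipschitzWith (L * lam) (branchPotential S G d i) :=
  h.lipschitz_potential.comp (h.lipschitzWith_inverseBranch i)

theorem mapsTo_inverseBranch {T S G : ℝ → ℝ} (h : IsCircleSystem lam L d T S G) {M R : ℝ≥0}
    (hM : |S 0| ≤ M) (hR : M + lam * d.natAbs + R * lam ≤ R) (i : Fin d.natAbs) :
    MapsTo (inverseBranch S d i) (closedBall 0 R) (closedBall 0 R) := by
  intro y hy
  rw [mem_closedBall, Real.dist_eq, sub_zero] at hy ⊢
  have hi : |y + i| ≤ R + d.natAbs :=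
    (abs_add_le _ _).trans (add_le_add hy (by
      rw [Nat.abs_cast]
      exact_mod_cast i.2.le))
  have hlip := h.lipschitz_inv.dist_le_mul (y + i) 0
  rw [Real.dist_eq, Real.dist_eq, sub_zero] at hlip
  calc |S (y + i)| = |S 0 + (S (y + i) - S 0)| := by rw [add_sub_cancel]
    _ ≤ |S 0| + |S (y + i) - S 0| := abs_add_le _ _
    _ ≤ M + lam * (R + d.natAbs) :=
      add_le_add hM (hlip.trans (mul_le_mul_of_nonneg_left hi lam.2))
    _ = (M + lam * d.natAbs + R * lam : ℝ≥0) := by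
      push_cast
      ring
    _ ≤ R := hR

variable {E : Type*} [NormedAddCommGroup E] [NormedSpace ℝ E] {K : ℕ} {T S G : E → ℝ → ℝ}
  {s : Set E} {t₀ : E}

theorem exists_isSmoothIFSFamily (h : ∀ t, IsCircleSystem lam L d (T t) (S t) (G t))
    (hS : ContDiff ℝ K fun p : E × ℝ => S p.1 p.2) (hG : ContDiff ℝ K fun p : E × ℝ => G p.1 p.2)
    (hs : IsCompact s) (hSs : ∀ t ∉ s, S t = S t₀) (hGs : ∀ t ∉ s, G t = G t₀) :
    ∃ R C : ℝ≥0, IsSmoothIFSFamily K (closedBall 0 R) lam (L * lam) C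
      (fun i p => inverseBranch (S p.1) d i p.2)
      fun i p => branchPotential (S p.1) (G p.1) d i p.2 := by
  have hfiber : ContDiff ℝ K fun y : ℝ => (t₀, y) := contDiff_const.prodMk contDiff_id
  have hψ : ∀ i, ContDiff ℝ K fun p : E × ℝ => inverseBranch (S p.1) d i p.2 := fun i =>
    hS.comp (contDiff_fst.prodMk (contDiff_snd.add contDiff_const))
  have hφ : ∀ i, ContDiff ℝ K fun p : E × ℝ => branchPotential (S p.1) (G p.1) d i p.2 := fun i =>
    hG.comp (contDiff_fst.prodMk (hψ i))
  obtain ⟨M, hM⟩ := exists_norm_iteratedFDeriv_le_of_eq_comp_snd hS (hS.comp hfiber) hs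
    isCompact_singleton fun t ht y => congrFun (hSs t ht) y
  obtain ⟨R, hR⟩ := exists_add_mul_le_self (h t₀).lt_one (M + lam * d.natAbs)
  choose Cψ hCψ using fun i => exists_norm_iteratedFDeriv_le_of_eq_comp_snd (hψ i)
    ((hψ i).comp hfiber) hs (isCompact_closedBall (0 : ℝ) R) fun t ht y =>
      show inverseBranch (S t) d i y = inverseBranch (S t₀) d i y by rw [hSs t ht]
  choose Cφ hCφ using fun i => exists_norm_iteratedFDeriv_le_of_eq_comp_snd (hφ i)
    ((hφ i).comp hfiber) hs (isCompact_closedBall (0 : ℝ) R) fun t ht y =>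
      show branchPotential (S t) (G t) d i y = branchPotential (S t₀) (G t₀) d i y by
        rw [hSs t ht, hGs t ht]
  have hle : ∀ i, Cψ i ⊔ Cφ i ≤ Finset.univ.sup fun i => Cψ i ⊔ Cφ i := fun i =>
    Finset.le_sup (f := fun i => Cψ i ⊔ Cφ i) (Finset.mem_univ i)
  refine ⟨R, Finset.univ.sup fun i => Cψ i ⊔ Cφ i, ?_⟩
  refine ⟨(h t₀).lt_one, hψ, hφ, fun i t => (h t).mapsTo_inverseBranch ?_ hR i,
    fun i t => (h t).lipschitzWith_inverseBranch i,
    fun i t => (h t).lipschitzWith_branchPotential i, fun i l hl t y hy => ?_,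
    fun i l hl t y hy => ?_⟩
  · simpa only [norm_iteratedFDeriv_zero, Real.norm_eq_abs] using hM 0 K.zero_le t 0 rfl
  · exact (hCψ i l hl t y hy).trans (by exact_mod_cast le_sup_left.trans (hle i))
  · exact (hCφ i l hl t y hy).trans (by exact_mod_cast le_sup_right.trans (hle i))

theorem contDiff_pressureExp (h : ∀ t, IsCircleSystem lam L d (T t) (S t) (G t))
    (hS : ContDiff ℝ K fun p : E × ℝ => S p.1 p.2) (hG : ContDiff ℝ K fun p : E × ℝ => G p.1 p.2)
    (hs : IsCompact s) (hSs : ∀ t ∉ s, S t = S t₀) (hGs : ∀ t ∉ s, G t = G t₀) :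
    ContDiff ℝ (K - 1 : ℕ) fun t => pressureExp (T t) (G t) := by
  have hne : Nonempty (Fin d.natAbs) := ⟨⟨0, Int.natAbs_pos.2 (h t₀).degree_ne_zero⟩⟩
  obtain ⟨R, C, hfam⟩ := exists_isSmoothIFSFamily h hS hG hs hSs hGs
  obtain ⟨P, hP, hlim⟩ := hfam.exists_contDiff_tendsto_log_partitionFun_div
    (mem_closedBall_self R.2) isBounded_closedBall
  have hpartition : ∀ t n, partitionFun
      (fun i => skewProduct fun p => inverseBranch (S p.1) d i p.2)
      (fun i p => branchPotential (S p.1) (G p.1) d i p.2) n (t, 0)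
        = partitionFun (inverseBranch (S t) d) (branchPotential (S t) (G t) d) n 0 := fun t n =>
    partitionFun_comp (h := fun y => (t, y)) (fun i y => rfl) (fun i y => rfl) n 0
  simp only [hpartition] at hlim
  rwa [show (fun t => pressureExp (T t) (G t)) = P from
    funext fun t => (h t).pressureExp_eq (hlim t)]

/-- Only the germ at `t₀` matters, so the family may be made constant away from `t₀`, which makes
the bounds on the derivatives uniform in the parameter. -/
theorem contDiffAt_pressureExp [FiniteDimensional ℝ E] {V : Set E} (hV : V ∈ 𝓝 t₀)
    (h : ∀ t ∈ V, IsCircleSystem lam L d (T t) (S t) (G t))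
    (hS : ContDiffOn ℝ K (fun p : E × ℝ => S p.1 p.2) (V ×ˢ univ))
    (hG : ContDiffOn ℝ K (fun p : E × ℝ => G p.1 p.2) (V ×ˢ univ)) :
    ContDiffAt ℝ (K - 1 : ℕ) (fun t => pressureExp (T t) (G t)) t₀ := by
  have hproper : ProperSpace E := FiniteDimensional.proper ℝ E
  obtain ⟨R, hR, hRV⟩ := nhds_basis_closedBall.mem_iff.1 hV
  obtain ⟨Θ, hΘ, hmem, hid, hout⟩ := exists_contDiff_eventuallyEq_id K t₀ hR
  have hΘ₀ : Θ t₀ = t₀ := hid.self_of_nhds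
  have hcomp : ∀ F : E → ℝ → ℝ, ContDiffOn ℝ K (fun p : E × ℝ => F p.1 p.2) (V ×ˢ univ) →
      ContDiff ℝ K fun p : E × ℝ => F (Θ p.1) p.2 := fun F hF =>
    contDiffOn_univ.1 <| hF.comp ((hΘ.comp contDiff_fst).prodMk contDiff_snd).contDiffOn
      fun p _ => ⟨hRV (hmem p.1), mem_univ _⟩
  have hsmooth := contDiff_pressureExp (t₀ := t₀) (fun t => h (Θ t) (hRV (hmem t))) (hcomp S hS)
    (hcomp G hG) (isCompact_closedBall t₀ R) (fun t ht => by rw [hout t ht, hΘ₀])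
    fun t ht => by rw [hout t ht, hΘ₀]
  refine hsmooth.contDiffAt.congr_of_eventuallyEq ?_
  filter_upwards [hid] with t ht
  rw [ht]

end IsCircleSystem

end Localisation

/-! ### Families of expanding maps and potentials -/

section Families

theorem eventually_isCircleLift {X : Type*} [TopologicalSpace X] {T : X → ℝ → ℝ} {t₀ : X} {d : ℤ}
    (hT : ∀ᶠ t in 𝓝 t₀, ∃ d, IsCircleLift (T t) d) (hc : ∀ x, ContinuousAt (fun t => T t x) t₀)
    (hd : IsCircleLift (T t₀) d) : ∀ᶠ t in 𝓝 t₀, IsCircleLift (T t) d := by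
  have hcont : ContinuousAt (fun t => T t 1 - T t 0) t₀ := (hc 1).sub (hc 0)
  have hball := hcont.eventually (Metric.ball_mem_nhds _ one_pos)
  filter_upwards [hT, hball] with t ⟨d', hd'⟩ hdist
  rw [hd'.apply_one_sub_apply_zero, hd.apply_one_sub_apply_zero, Int.dist_cast_real] at hdist
  exact Int.pairwise_one_le_dist.eq hdist.not_ge ▸ hd'

theorem IsExpandingLift.isCircleSystem {lam L : ℝ≥0} (hlam : 0 < lam) (hlam1 : lam < 1) {r : ℕ}
    (hr : 1 ≤ r) {T G : ℝ → ℝ} (hT : IsExpandingLift lam r T) {d : ℤ} (hd : IsCircleLift T d)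
    (hG : Function.Periodic G 1) (hL : LipschitzWith L G) :
    IsCircleSystem lam L d T (Function.invFun T) G := by
  have hanti := hT.antilipschitzWith hlam hr
  have hright := Function.rightInverse_invFun (hT.surjective hlam hr)
  exact ⟨hlam1, hd, Function.leftInverse_invFun hanti.injective, hright,
    hanti.to_rightInverse hright, hG, hL⟩

variable {E : Type*} [NormedAddCommGroup E] [NormedSpace ℝ E] {U : Set E} {N r : ℕ}

theorem CNFamily.exists_eventually_lipschitzWith {G : E → ℝ → ℝ} (hG : CNFamily N r U G)
    (hr : 1 ≤ r) (hU : IsOpen U) (hp : ∀ t ∈ U, Function.Periodic (G t) 1) {t₀ : E} (ht₀ : t₀ ∈ U) :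
    ∃ L, ∀ᶠ t in 𝓝 t₀, LipschitzWith L (G t) := by
  have hcont := ((hG.2 1 hr).continuousOn.continuousAt (hU.mem_nhds ht₀)).nnnorm
  obtain ⟨L, hL⟩ := exists_gt ‖toBCF (iteratedDeriv 1 (G t₀))‖₊
  refine ⟨L, ?_⟩
  filter_upwards [hU.mem_nhds ht₀, hcont.eventually_lt_const hL] with t ht hlt
  have hsmooth : ContDiff ℝ 1 (G t) := (hG.1 t ht).of_le (by exact_mod_cast hr)
  refine lipschitzWith_of_nnnorm_deriv_le (hsmooth.differentiable one_ne_zero) fun x => ?_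
  rw [← iteratedDeriv_one, ← toBCF_apply (hsmooth.continuous_iteratedDeriv 1 le_rfl)
    (periodic_iteratedDeriv (hp t ht) 1)]
  exact (BoundedContinuousFunction.nnnorm_coe_le_nnnorm _ x).trans hlt.le

theorem ExpandingFamily.of_le {lam : ℝ} {s : ℕ} {T : E → ℝ → ℝ} (hT : ExpandingFamily N r lam U T)
    (hs : s ≤ r) : ExpandingFamily N s lam U T := by
  have hs' : (s : WithTop ℕ∞) ≤ r := by exact_mod_cast hs
  exact ⟨fun t ht => ⟨(hT.1 t ht).1.of_le hs', (hT.1 t ht).2⟩,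
    fun t ht => (hT.2.1 t ht).of_le hs', hT.2.2.1, fun j hj hjs => hT.2.2.2 j hj (hjs.trans hs)⟩

variable [FiniteDimensional ℝ E]

theorem ExpandingFamily.contDiffOn_uncurry {lam : ℝ} {T : E → ℝ → ℝ}
    (hT : ExpandingFamily N r lam U T) (hU : IsOpen U) (hr : 1 ≤ r) :
    ContDiffOn ℝ (min N r : ℕ) (fun p : E × ℝ => T p.1 p.2) (U ×ˢ univ) :=
  hT.2.contDiffOn_uncurry hU hr fun t ht =>
    let ⟨_, hd⟩ := (hT.1 t ht).2.1
    hd.periodic_deriv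

theorem ExpandingFamily.exists_eventually_isCircleLift {lam : ℝ} {T : E → ℝ → ℝ}
    (hT : ExpandingFamily N r lam U T) (hU : IsOpen U) (hr : 1 ≤ r) {t₀ : E} (ht₀ : t₀ ∈ U) :
    ∃ d, ∀ᶠ t in 𝓝 t₀, IsCircleLift (T t) d := by
  obtain ⟨d, hd⟩ := (hT.1 t₀ ht₀).2.1
  refine ⟨d, eventually_isCircleLift
    (eventually_of_mem (hU.mem_nhds ht₀) fun t ht => (hT.1 t ht).2.1) (fun x => ?_) hd⟩
  have hjoint : ContinuousAt (fun p : E × ℝ => T p.1 p.2) (t₀, x) :=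
    (hT.contDiffOn_uncurry hU hr).continuousOn.continuousAt
      ((hU.prod isOpen_univ).mem_nhds ⟨ht₀, mem_univ x⟩)
  exact ContinuousAt.comp (f := fun t => (t, x)) hjoint (continuousAt_id.prodMk continuousAt_const)

theorem ExpandingFamily.contDiffOn_uncurry_inverse {lam : ℝ≥0} {T S : E → ℝ → ℝ}
    (hT : ExpandingFamily N r lam U T) (hU : IsOpen U) (hr : 1 ≤ r) (hlam : 0 < lam)
    (hS : ∀ t ∈ U, Function.RightInverse (S t) (T t)) :
    ContDiffOn ℝ (min N r : ℕ) (fun p : E × ℝ => S p.1 p.2) (U ×ˢ univ) := by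
  have hcomplete : CompleteSpace E := FiniteDimensional.complete ℝ E
  refine contDiffOn_inverse_of_antilipschitzWith hU (hT.contDiffOn_uncurry hU hr)
    (fun t ht => (hT.1 t ht).antilipschitzWith hlam hr) hS fun t ht x => ?_
  have hderiv : deriv (T t) x ≠ 0 := fun h0 =>
    (inv_pos.2 (NNReal.coe_pos.2 hlam)).not_ge (by simpa [h0] using (hT.1 t ht).2.2 x)
  exact ⟨_, (differentiableAt_of_deriv_ne_zero hderiv).hasDerivAt.hasFDerivAt_equiv hderiv⟩

theorem statement19_general {U : Set E} (hU : IsOpen U) {r N : ℕ} (hr : 1 ≤ r) {lam : ℝ}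
    (hlam : 0 < lam) (hlam1 : lam < 1) {T G : E → ℝ → ℝ} (hT : ExpandingFamily N r lam U T)
    (hG : PotentialFamily N r U G) :
    ContDiffOn ℝ (min (N - 1) (r - 1) : ℕ) (fun t => Real.exp (pressureExp (T t) (G t))) U := by
  lift lam to ℝ≥0 using hlam.le
  have hGper : ∀ t ∈ U, Function.Periodic (G t) 1 := fun t ht => (hG.1 t ht).2
  intro t₀ ht₀
  obtain ⟨d, hd⟩ := hT.exists_eventually_isCircleLift hU hr ht₀
  obtain ⟨L, hL⟩ := hG.2.exists_eventually_lipschitzWith hr hU hGper ht₀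
  have hinv : ContDiffOn ℝ (min N r : ℕ)
      (fun p : E × ℝ => Function.invFun (T p.1) p.2) (U ×ˢ univ) :=
    hT.contDiffOn_uncurry_inverse hU hr hlam fun t ht =>
      Function.rightInverse_invFun ((hT.1 t ht).surjective hlam hr)
  have hpressure := IsCircleSystem.contDiffAt_pressureExp
    (inter_mem (hU.mem_nhds ht₀) (hd.and hL))
    (fun t ⟨ht, hdt, hLt⟩ => (hT.1 t ht).isCircleSystem hlam hlam1 hr hdt (hGper t ht) hLt)
    (hinv.mono (prod_mono_left inter_subset_left))
    ((hG.2.contDiffOn_uncurry hU hGper).mono (prod_mono_left inter_subset_left))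
  rw [Nat.sub_min_sub_right]
  exact hpressure.exp.contDiffWithinAt

end Families

/-- **Statement 19** (Lemma `rmoinsq`).  If `r ≥ 4`, the map `t ↦ e^{P_t(g_t)}` is
`C^k` on `U`, where `k = min (N − 1) (r − 4)`. -/
theorem statement19
    (D : ℕ) (U : Set (Fin D → ℝ)) (hU : IsOpen U)
    (r N : ℕ) (hr : 4 ≤ r) (lam : ℝ) (hlam : 0 < lam) (hlam1 : lam < 1)
    (T G : (Fin D → ℝ) → ℝ → ℝ)
    (hT : ExpandingFamily N (r + 1) lam U T)
    (hG : PotentialFamily N r U G) :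
    ContDiffOn ℝ (min (N - 1) (r - 4))
      (fun t => Real.exp (pressureExp (T t) (G t))) U := by
  have hmin : min ((N : WithTop ℕ∞) - 1) (r - 4) = (min (N - 1) (r - 4) : ℕ) := by norm_cast
  exact (statement19_general hU (by lia) hlam hlam1 (hT.of_le r.le_succ) hG).of_le
    (hmin.trans_le (by exact_mod_cast by lia))
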